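/- Every element of the quasi-fundamental set F̃ is a positive imaginary root of the quiver Q. -/

import Mathlib

open Polynomial Matrix BigOperators

namespace DS

noncomputable section

/-- The data of a collection of HTL normal forms `B⁽ⁱ⁾`, `i = 0,…,p`, on `ℂⁿ`:
block counts `m i`, pole orders `kk i`, block sizes `nn i j`, irregular parts
`q i j ∈ s²ℂ[s]` (pairwise distinct, degree ≤ kk i), residue blocks `R i j`,
chosen annihilating eigenvalue lists `ξ i j`, and an identification of
`Σ j, Fin (nn i j)` with `Fin n` (the block decomposition of `ℂⁿ`). -/
structure Setup where
  p : ℕ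
  n : ℕ
  hn : 0 < n
  m : Fin (p+1) → ℕ
  hm : ∀ i, 0 < m i
  kk : Fin (p+1) → ℕ
  hkk : ∀ i, 0 < kk i
  nn : ∀ i : Fin (p+1), Fin (m i) → ℕ
  q : ∀ i : Fin (p+1), Fin (m i) → Polynomial ℂ
  hq0 : ∀ i j, (q i j).coeff 0 = 0
  hq1 : ∀ i j, (q i j).coeff 1 = 0
  hqdeg : ∀ i j, (q i j).natDegree ≤ kk i
  hqdist : ∀ i : Fin (p+1), ∀ j j' : Fin (m i), j ≠ j' → q i j ≠ q i j'
  e : ∀ i : Fin (p+1), Fin (m i) → ℕ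
  he : ∀ i j, 0 < e i j
  xi : ∀ (i : Fin (p+1)) (j : Fin (m i)), Fin (e i j) → ℂ
  R : ∀ (i : Fin (p+1)) (j : Fin (m i)), Matrix (Fin (nn i j)) (Fin (nn i j)) ℂ
  hxi : ∀ i j, (((List.finRange (e i j)).map fun l => R i j - xi i j l • 1).prod) = 0
  emb : ∀ i : Fin (p+1), (Σ j : Fin (m i), Fin (nn i j)) ≃ Fin n
  hreg : ∀ i : Fin (p+1), ¬ (1 < m i ∨ i = 0) → kk i = 1

/-- `i ∈ I_irr` : the indices of irregular singular points together with `0`. -/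
def Iirr (S : Setup) (i : Fin (S.p+1)) : Prop := 1 < S.m i ∨ i = 0

instance (S : Setup) : DecidablePred (Iirr S) := fun i =>
  inferInstanceAs (Decidable (1 < S.m i ∨ i = 0))

/-- Vertices `[i,j]` for `i ∈ I_irr`. -/
abbrev Vb (S : Setup) := Σ i : {i : Fin (S.p+1) // Iirr S i}, Fin (S.m i.1)

/-- Vertices `[i,j,k]` for `0 ≤ i ≤ p`, `1 ≤ j ≤ m⁽ⁱ⁾`, `1 ≤ k ≤ e[i,j]-1`
(the third component `κ` encodes `k = κ+1`). -/
abbrev Vr (S : Setup) := Σ i : Fin (S.p+1), Σ j : Fin (S.m i), Fin (S.e i j - 1)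

/-- The vertex set `Q₀` of the quiver `Q`. -/
abbrev V (S : Setup) := Vb S ⊕ Vr S

/-- `d_i(j,j') = deg (q_j - q_j') - 2`. -/
def dcnt (S : Setup) (i : Fin (S.p+1)) (j j' : Fin (S.m i)) : ℕ :=
  (S.q i j - S.q i j').natDegree - 2

/-- The number of arrows of `Q` from a vertex `a` to a vertex `b`. -/
def arr (S : Setup) : V S → V S → ℕ
  | .inl ⟨i, j⟩, .inl ⟨i', j'⟩ =>
      (if i.1 = 0 ∧ i'.1 ≠ 0 then 1 else 0) +
      (if h : i = i' then
        (if (j : ℕ) < (j' : ℕ) then dcnt S i.1 j (Fin.cast (by rw [h]) j') else 0)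
       else 0)
  | .inl _, .inr _ => 0
  | .inr ⟨i, j, κ⟩, .inl ⟨i', j'⟩ =>
      (if i = i'.1 ∧ (j : ℕ) = (j' : ℕ) ∧ (κ : ℕ) = 0 then 1 else 0) +
      (if ¬ Iirr S i ∧ i'.1 = 0 ∧ (j : ℕ) = 0 ∧ (κ : ℕ) = 0 then 1 else 0)
  | .inr ⟨i, j, κ⟩, .inr ⟨i', j', κ'⟩ =>
      if i = i' ∧ (j : ℕ) = (j' : ℕ) ∧ (κ : ℕ) = (κ' : ℕ) + 1 then 1 else 0

/-- The Euler form `⟨β,γ⟩` of the quiver `Q`. -/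
def eform (S : Setup) (β γ : V S → ℤ) : ℤ :=
  (∑ a : V S, β a * γ a) - ∑ a : V S, ∑ b : V S, (arr S a b : ℤ) * β a * γ b

/-- The symmetrized bilinear form `(β,γ)`. -/
def bform (S : Setup) (β γ : V S → ℤ) : ℤ := eform S β γ + eform S γ β

/-- The quadratic form `q(β)`. -/
def qform (S : Setup) (β : V S → ℤ) : ℤ := eform S β β

/-- `p(β) = 1 - q(β)`. -/
def pform (S : Setup) (β : V S → ℤ) : ℤ := 1 - qform S β

/-- The coordinate vector `ε_a`. -/
def eps (S : Setup) (a : V S) : V S → ℤ := fun b => if b = a then 1 else 0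

/-- The fundamental reflection `s_a`. -/
def refl1 (S : Setup) (a : V S) (β : V S → ℤ) : V S → ℤ :=
  fun b => β b - bform S β (eps S a) * eps S a b

/-- Iterated fundamental reflections (a Weyl group element). -/
def reflList (S : Setup) (l : List (V S)) (β : V S → ℤ) : V S → ℤ :=
  l.foldr (refl1 S) β

/-- The support of a vector. -/
def supp (S : Setup) (β : V S → ℤ) : Set (V S) := {a | β a ≠ 0}

/-- The support of `β` is connected in the underlying graph of `Q`. -/
def connSupp (S : Setup) (β : V S → ℤ) : Prop :=
  ∀ a ∈ supp S β, ∀ b ∈ supp S β,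
    Relation.ReflTransGen
      (fun x y => (0 < arr S x y + arr S y x) ∧ x ∈ supp S β ∧ y ∈ supp S β) a b

/-- The fundamental set of the root system of `Q` (all vertices of `Q` are loop-free). -/
def fund (S : Setup) (β : V S → ℤ) : Prop :=
  β ≠ 0 ∧ (∀ a, 0 ≤ β a) ∧ connSupp S β ∧ ∀ a : V S, bform S β (eps S a) ≤ 0

/-- Real roots of `Q`. -/
def isRealRoot (S : Setup) (β : V S → ℤ) : Prop :=
  ∃ (l : List (V S)) (a : V S), β = reflList S l (eps S a)

/-- Imaginary roots of `Q`. -/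
def isImagRoot (S : Setup) (β : V S → ℤ) : Prop :=
  ∃ (l : List (V S)) (γ : V S → ℤ), (fund S γ ∨ fund S (-γ)) ∧ β = reflList S l γ

/-- Roots of `Q`. -/
def isRoot (S : Setup) (β : V S → ℤ) : Prop := isRealRoot S β ∨ isImagRoot S β

/-- Positive roots of `Q`. -/
def isPosRoot (S : Setup) (β : V S → ℤ) : Prop := isRoot S β ∧ ∀ a, 0 ≤ β a

/-- The index `0` as an element of `I_irr`. -/
def i0 (S : Setup) : {i : Fin (S.p+1) // Iirr S i} := ⟨0, Or.inr rfl⟩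

/-- The vertex `[0,j]`. -/
def v0 (S : Setup) (j : Fin (S.m 0)) : V S := Sum.inl ⟨i0 S, j⟩

/-- The vertex `[i,j]` for `i ∈ I_irr`. -/
def vI (S : Setup) (i : {i : Fin (S.p+1) // Iirr S i}) (j : Fin (S.m i.1)) : V S :=
  Sum.inl ⟨i, j⟩

/-- The lattice `L`: `Σ_j β_[0,j] = Σ_j β_[i,j]` for all `i ∈ I_irr ∖ {0}`. -/
def inL (S : Setup) (β : V S → ℤ) : Prop :=
  ∀ i : {i : Fin (S.p+1) // Iirr S i}, i.1 ≠ 0 →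
    (∑ j : Fin (S.m 0), β (v0 S j)) = ∑ j : Fin (S.m i.1), β (vI S i j)

/-- `L⁺ = L ∩ (ℤ≥0)^{Q₀}`. -/
def inLpos (S : Setup) (β : V S → ℤ) : Prop := inL S β ∧ ∀ a, 0 ≤ β a

/-- The dimension vector `α` (as natural numbers):
`α_[i,j] = n⁽ⁱ⁾_j`, `α_[i,j,k] = rank ∏_{l=1}^k (R⁽ⁱ⁾_j - ξ^{[i,j]}_l)`. -/
noncomputable def alN (S : Setup) : V S → ℕ
  | .inl ⟨i, j⟩ => S.nn i.1 j
  | .inr ⟨i, j, κ⟩ =>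
      ((((List.finRange (S.e i j)).take ((κ : ℕ) + 1)).map
          fun l => S.R i j - S.xi i j l • 1).prod).rank

/-- The dimension vector `α` as an integer vector. -/
noncomputable def alZ (S : Setup) : V S → ℤ := fun a => (alN S a : ℤ)

/-- The parameter `λ ∈ ℂ^{Q₀}`. -/
noncomputable def lam (S : Setup) : V S → ℂ
  | .inl ⟨i, j⟩ =>
      if h : i.1 = 0 then
        (- S.xi 0 (Fin.cast (by rw [h]) j) ⟨0, S.he 0 (Fin.cast (by rw [h]) j)⟩)
          - ∑ i' ∈ Finset.univ.filter (fun i' : Fin (S.p+1) => ¬ Iirr S i'),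
              S.xi i' ⟨0, S.hm i'⟩ ⟨0, S.he i' ⟨0, S.hm i'⟩⟩
      else - S.xi i.1 j ⟨0, S.he i.1 j⟩
  | .inr ⟨i, j, κ⟩ =>
      S.xi i j ⟨(κ : ℕ), by have := κ.2; omega⟩
        - S.xi i j ⟨(κ : ℕ) + 1, by have := κ.2; omega⟩

/-- Pairing `β · μ = Σ_a β_a μ_a` between `ℤ^{Q₀}` and `ℂ^{Q₀}`. -/
noncomputable def dotC (S : Setup) (β : V S → ℤ) (μ : V S → ℂ) : ℂ :=
  ∑ a : V S, (β a : ℂ) * μ a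

/-- `β ∈ R̃⁺_μ` : positive roots of `Q` lying in `L` with `β·μ = 0`. -/
def inRt (S : Setup) (μ : V S → ℂ) (β : V S → ℤ) : Prop :=
  isPosRoot S β ∧ inL S β ∧ dotC S β μ = 0

/-- `β ∈ ℕR̃⁺_μ` : finite sums (including `0`) of elements of `R̃⁺_μ`. -/
def inNRt (S : Setup) (μ : V S → ℂ) (β : V S → ℤ) : Prop :=
  ∃ (r : ℕ) (γ : Fin r → (V S → ℤ)), (∀ t, inRt S μ (γ t)) ∧ β = ∑ t, γ t

/-- `β ∈ Σ̃_μ`. -/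
def inSig (S : Setup) (μ : V S → ℂ) (β : V S → ℤ) : Prop :=
  inRt S μ β ∧ ∀ (r : ℕ), 2 ≤ r → ∀ γ : Fin r → (V S → ℤ),
    (∀ t, inRt S μ (γ t)) → β = ∑ t, γ t → (∑ t, pform S (γ t)) < pform S β

/-! ### The matrix side: truncated orbits.

An element `Σ_{j=1}^{k} A_j x^{-j}` of `𝔤_k*` is encoded as the polynomial matrix
`Σ_{j=1}^{k} A_j x^{k-j}` (of degree `< k`); the coadjoint `G_k`-action becomes
conjugation modulo `x^k` by polynomial matrices with invertible constant term. -/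

abbrev PMat (S : Setup) := Matrix (Fin S.n) (Fin S.n) (Polynomial ℂ)

/-- All entries have degree `< k`. -/
def degLT (S : Setup) (k : ℕ) (A : PMat S) : Prop :=
  ∀ a b, (A a b).degree < (k : ℕ)

/-- The HTL normal form `B⁽ⁱ⁾`, in the polynomial encoding. -/
noncomputable def Bmat (S : Setup) (i : Fin (S.p+1)) : PMat S :=
  Matrix.of fun a b =>
    if h : ((S.emb i).symm a).1 = ((S.emb i).symm b).1 then
      (if Fin.cast (by rw [h]) ((S.emb i).symm a).2 = ((S.emb i).symm b).2 then
          Polynomial.reflect (S.kk i) (S.q i ((S.emb i).symm b).1)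
        else 0)
        + Polynomial.C
            (S.R i ((S.emb i).symm b).1 (Fin.cast (by rw [h]) ((S.emb i).symm a).2)
              ((S.emb i).symm b).2)
          * Polynomial.X ^ (S.kk i - 1)
    else 0

/-- Membership in the truncated orbit `𝒪_{B⁽ⁱ⁾}`. -/
def inOrbit (S : Setup) (i : Fin (S.p+1)) (A : PMat S) : Prop :=
  degLT S (S.kk i) A ∧
  ∃ g : PMat S, IsUnit (g.map fun r => r.coeff 0) ∧
    ∀ a b, (Polynomial.X ^ (S.kk i) : Polynomial ℂ) ∣ (g * Bmat S i - A * g) a b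

/-- The residue matrix `A⁽ⁱ⁾₁`. -/
def resMat (S : Setup) (i : Fin (S.p+1)) (A : PMat S) : Matrix (Fin S.n) (Fin S.n) ℂ :=
  Matrix.of fun a b => (A a b).coeff (S.kk i - 1)

/-- `(A⁽ⁱ⁾)_{0≤i≤p} ∈ ∏ 𝒪_{B⁽ⁱ⁾}` with `Σ A⁽ⁱ⁾₁ = 0`. -/
def isDSElem (S : Setup) (A : ∀ _ : Fin (S.p+1), PMat S) : Prop :=
  (∀ i, inOrbit S i (A i)) ∧ (∑ i, resMat S i (A i)) = 0

/-- Irreducibility of the collection of all coefficient matrices `A⁽ⁱ⁾_j`. -/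
def irredTuple (S : Setup) (A : ∀ _ : Fin (S.p+1), PMat S) : Prop :=
  ∀ W : Submodule ℂ (Fin S.n → ℂ),
    (∀ (i : Fin (S.p+1)) (l : ℕ), ∀ v ∈ W,
        (Matrix.of fun a b => (A i a b).coeff l).mulVec v ∈ W) →
    W = ⊥ ∨ W = ⊤

/-! ### Representations of the double quiver -/

/-- A representation of the double quiver `Q̄` with dimension vector `β`:
`f a b ρ` is the matrix of `ψ_ρ : ℂ^{β a} → ℂ^{β b}` and `g a b ρ` the matrix of
`ψ_{ρ*} : ℂ^{β b} → ℂ^{β a}`, for the `ρ`-th arrow `a → b` of `Q`. -/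
structure Rep (S : Setup) (β : V S → ℕ) where
  f : ∀ a b : V S, Fin (arr S a b) → Matrix (Fin (β b)) (Fin (β a)) ℂ
  g : ∀ a b : V S, Fin (arr S a b) → Matrix (Fin (β a)) (Fin (β b)) ℂ

/-- The moment map at a vertex `c`. -/
noncomputable def moment (S : Setup) {β : V S → ℕ} (M : Rep S β) (c : V S) :
    Matrix (Fin (β c)) (Fin (β c)) ℂ :=
  (∑ a : V S, ∑ ρ : Fin (arr S a c), M.f a c ρ * M.g a c ρ)
    - ∑ b : V S, ∑ ρ : Fin (arr S c b), M.g c b ρ * M.f c b ρ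

/-- `M ∈ Rep(Q̄,β)_μ`. -/
def onMu (S : Setup) {β : V S → ℕ} (μ : V S → ℂ) (M : Rep S β) : Prop :=
  ∀ c : V S, moment S M c = μ c • (1 : Matrix (Fin (β c)) (Fin (β c)) ℂ)

/-- The block matrix `(ψ_{ρ^{[0,j]}_{[i,j']}})_{j,j'}` for `i ∈ I_irr ∖ {0}`. -/
noncomputable def crossMat (S : Setup) {β : V S → ℕ} (M : Rep S β)
    (i : {i : Fin (S.p+1) // Iirr S i}) :
    Matrix (Σ j' : Fin (S.m i.1), Fin (β (vI S i j'))) (Σ j : Fin (S.m 0), Fin (β (v0 S j))) ℂ :=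
  Matrix.of fun x y =>
    if h : 0 < arr S (v0 S y.1) (vI S i x.1) then
      M.f (v0 S y.1) (vI S i x.1) ⟨0, h⟩ x.2 y.2
    else 0

/-- All the block matrices `(ψ_{ρ^{[0,j]}_{[i,j']}})` for `i ∈ I_irr ∖ {0}` are invertible. -/
def crossBij (S : Setup) {β : V S → ℕ} (M : Rep S β) : Prop :=
  ∀ i : {i : Fin (S.p+1) // Iirr S i}, i.1 ≠ 0 →
    Function.Bijective ((crossMat S M i).mulVec)

/-- The combined map `(ψ_{ρ^{[i,1,1]}_{[0,j]}})_j : ℂ^{β [i,1,1]} → ⊕_j ℂ^{β [0,j]}`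
(for `i ∈ I_reg`). -/
noncomputable def regMatF (S : Setup) {β : V S → ℕ} (M : Rep S β)
    (i : Fin (S.p+1)) (j : Fin (S.m i)) (κ : Fin (S.e i j - 1)) :
    Matrix (Σ j' : Fin (S.m 0), Fin (β (v0 S j'))) (Fin (β (Sum.inr ⟨i, j, κ⟩))) ℂ :=
  Matrix.of fun x y =>
    if h : 0 < arr S (Sum.inr ⟨i, j, κ⟩) (v0 S x.1) then
      M.f (Sum.inr ⟨i, j, κ⟩) (v0 S x.1) ⟨0, h⟩ x.2 y
    else 0

/-- The combined map `(ψ_{(ρ^{[i,1,1]}_{[0,j]})*})_j : ⊕_j ℂ^{β [0,j]} → ℂ^{β [i,1,1]}`. -/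
noncomputable def regMatG (S : Setup) {β : V S → ℕ} (M : Rep S β)
    (i : Fin (S.p+1)) (j : Fin (S.m i)) (κ : Fin (S.e i j - 1)) :
    Matrix (Fin (β (Sum.inr ⟨i, j, κ⟩))) (Σ j' : Fin (S.m 0), Fin (β (v0 S j'))) ℂ :=
  Matrix.of fun y x =>
    if h : 0 < arr S (Sum.inr ⟨i, j, κ⟩) (v0 S x.1) then
      M.g (Sum.inr ⟨i, j, κ⟩) (v0 S x.1) ⟨0, h⟩ y x.2
    else 0

/-- `M ∈ Rep(Q̄,β)_μ^{dif}` (the open conditions). -/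
def difCond (S : Setup) {β : V S → ℕ} (M : Rep S β) : Prop :=
  crossBij S M ∧
  (∀ (i : Fin (S.p+1)), ¬ Iirr S i → ∀ (j : Fin (S.m i)) (κ : Fin (S.e i j - 1)),
      (κ : ℕ) = 0 →
      Function.Injective ((regMatF S M i j κ).mulVec) ∧
      Function.Surjective ((regMatG S M i j κ).mulVec)) ∧
  (∀ (i : Fin (S.p+1)) (j : Fin (S.m i)) (κ : Fin (S.e i j - 1)) (b : V S)
      (ρ : Fin (arr S (Sum.inr ⟨i, j, κ⟩) b)),
      (¬ Iirr S i ∧ (κ : ℕ) = 0) ∨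
      (Function.Injective ((M.f (Sum.inr ⟨i, j, κ⟩) b ρ).mulVec) ∧
       Function.Surjective ((M.g (Sum.inr ⟨i, j, κ⟩) b ρ).mulVec)))

/-- A family of subspaces forming a subrepresentation of `M`. -/
def isSubrep (S : Setup) {β : V S → ℕ} (M : Rep S β)
    (W : ∀ a : V S, Submodule ℂ (Fin (β a) → ℂ)) : Prop :=
  ∀ (a b : V S) (ρ : Fin (arr S a b)),
    (∀ v ∈ W a, (M.f a b ρ).mulVec v ∈ W b) ∧ (∀ v ∈ W b, (M.g a b ρ).mulVec v ∈ W a)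

/-- Irreducibility of a representation. -/
def irredRep (S : Setup) {β : V S → ℕ} (M : Rep S β) : Prop :=
  ∀ W, isSubrep S M W → (∀ a, W a = ⊥) ∨ (∀ a, W a = ⊤)

/-- A dimension vector is balanced if `Σ_j γ_[0,j] = Σ_j γ_[i,j]` for all `i ∈ I_irr∖{0}`. -/
def balanced (S : Setup) (γ : V S → ℕ) : Prop :=
  ∀ i : {i : Fin (S.p+1) // Iirr S i}, i.1 ≠ 0 →
    (∑ j : Fin (S.m 0), γ (v0 S j)) = ∑ j : Fin (S.m i.1), γ (vI S i j)

/-- Quasi-irreducibility: no nontrivial proper subrepresentation with balanced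
dimension vector. -/
def quasiIrred (S : Setup) {β : V S → ℕ} (M : Rep S β) : Prop :=
  ∀ W, isSubrep S M W → balanced S (fun a => Module.finrank ℂ (W a)) →
    (∀ a, W a = ⊥) ∨ (∀ a, W a = ⊤)

/-- Simultaneous conjugation of representations by `∏_a GL(β_a, ℂ)`. -/
def repConj (S : Setup) {β : V S → ℕ} (M N : Rep S β) : Prop :=
  ∃ g : ∀ a : V S, (Matrix (Fin (β a)) (Fin (β a)) ℂ)ˣ,
    (∀ a b ρ, N.f a b ρ = ((g b).val * M.f a b ρ) * ((g a)⁻¹).val) ∧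
    (∀ a b ρ, N.g a b ρ = ((g a).val * M.g a b ρ) * ((g b)⁻¹).val)

/-- Simultaneous conjugation of tuples by `GL(n, ℂ)`. -/
def tupConj (S : Setup) (A A' : ∀ _ : Fin (S.p+1), PMat S) : Prop :=
  ∃ g : (Matrix (Fin S.n) (Fin S.n) ℂ)ˣ,
    ∀ i, A' i = (g.val.map Polynomial.C) * A i * ((g⁻¹).val.map Polynomial.C)

/-- Carrier of the moduli space `ℳ*_{st}(𝐁)`. -/
abbrev MstC (S : Setup) := {A : ∀ _ : Fin (S.p+1), PMat S // isDSElem S A ∧ irredTuple S A}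

/-- The moduli space `ℳ*_{st}(𝐁)` of stable connections, identified with conjugacy
classes of irreducible elements of `∏ 𝒪_{B⁽ⁱ⁾}` with vanishing residue sum. -/
abbrev Mst (S : Setup) := Quot (fun A A' : MstC S => tupConj S A.1 A'.1)

abbrev DSC (S : Setup) := {A : ∀ _ : Fin (S.p+1), PMat S // isDSElem S A}

abbrev DSQ (S : Setup) := Quot (fun A A' : DSC S => tupConj S A.1 A'.1)

abbrev RepIrrC (S : Setup) (μ : V S → ℂ) :=
  {M : Rep S (alN S) // onMu S μ M ∧ irredRep S M}

/-- The quiver variety `𝔐^{reg}_μ(Q,α)`. -/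
abbrev Mreg (S : Setup) (μ : V S → ℂ) :=
  Quot (fun M N : RepIrrC S μ => repConj S M.1 N.1)

abbrev DifC (S : Setup) (μ : V S → ℂ) :=
  {M : Rep S (alN S) // onMu S μ M ∧ difCond S M}

abbrev DifQ (S : Setup) (μ : V S → ℂ) :=
  Quot (fun M N : DifC S μ => repConj S M.1 N.1)

abbrev QIC (S : Setup) (μ : V S → ℂ) :=
  {M : Rep S (alN S) // onMu S μ M ∧ quasiIrred S M ∧ crossBij S M}

abbrev QIQ (S : Setup) (μ : V S → ℂ) :=
  Quot (fun M N : QIC S μ => repConj S M.1 N.1)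

/-! ### `J`, `ε_𝐢`, and the equivalence relation `∼` -/

/-- `ε_𝐢 = Σ_{i ∈ I_irr} ε_{[i,j_i]}` for `𝐢 = ([i,j_i]) ∈ 𝒥`. -/
def epsJ (S : Setup) (I : ∀ i : Fin (S.p+1), Fin (S.m i)) : V S → ℤ
  | .inl ⟨i, j⟩ => if (j : ℕ) = (I i.1 : ℕ) then 1 else 0
  | .inr _ => 0

/-- The reflection `s_𝐢`. -/
def sJ (S : Setup) (I : ∀ i : Fin (S.p+1), Fin (S.m i)) (β : V S → ℤ) : V S → ℤ :=
  fun b => β b - bform S β (epsJ S I) * epsJ S I b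

/-- The quasi-fundamental set `F̃`. -/
def quasiFund (S : Setup) (β : V S → ℤ) : Prop :=
  inL S β ∧ (∀ a, 0 ≤ β a) ∧ β ≠ 0 ∧
  (∀ I : ∀ i : Fin (S.p+1), Fin (S.m i), bform S β (epsJ S I) ≤ 0) ∧
  (∀ (i : Fin (S.p+1)) (j : Fin (S.m i)) (κ : Fin (S.e i j - 1)),
      bform S β (eps S (Sum.inr ⟨i, j, κ⟩)) ≤ 0) ∧
  connSupp S β

/-- `μ_𝐢 = Σ_{i ∈ I_irr} μ_{[i,j_i]}`. -/
noncomputable def muJ (S : Setup) (I : ∀ i : Fin (S.p+1), Fin (S.m i)) (μ : V S → ℂ) : ℂ :=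
  ∑ i : {i : Fin (S.p+1) // Iirr S i}, μ (vI S i (I i.1))

/-- The transformed parameter `μ'` in the move `s_𝐢` on pairs. -/
noncomputable def muMove (S : Setup) (I : ∀ i : Fin (S.p+1), Fin (S.m i)) (μ : V S → ℂ) :
    V S → ℂ := fun a =>
  match a with
  | .inl ⟨i, j⟩ =>
      if i.1 = 0 ∧ (j : ℕ) = (I 0 : ℕ) then μ a - 2 * muJ S I μ else μ a
  | .inr ⟨i, j, κ⟩ =>
      if j = I i ∧ (κ : ℕ) = 0 then μ a + muJ S I μ else μ a

/-- The reflected parameter `r_a(μ)` for a vertex `a`. -/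
noncomputable def rvtx (S : Setup) (a : V S) (μ : V S → ℂ) : V S → ℂ :=
  fun b => μ b - ((bform S (eps S a) (eps S b) : ℤ) : ℂ) * μ a

/-- One move generating the relation `∼` on pairs `(β,μ)`. -/
def stepRel (S : Setup) :
    ((V S → ℤ) × (V S → ℂ)) → ((V S → ℤ) × (V S → ℂ)) → Prop := fun x y =>
  (∃ (i : Fin (S.p+1)) (j : Fin (S.m i)) (κ : Fin (S.e i j - 1)),
      x.2 (Sum.inr ⟨i, j, κ⟩) ≠ 0 ∧
      y = (refl1 S (Sum.inr ⟨i, j, κ⟩) x.1, rvtx S (Sum.inr ⟨i, j, κ⟩) x.2)) ∨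
  (∃ I : ∀ i : Fin (S.p+1), Fin (S.m i),
      muJ S I x.2 ≠ 0 ∧ y = (sJ S I x.1, muMove S I x.2))

/-- The smallest equivalence relation `∼` containing all the moves. -/
def pairEquiv (S : Setup) :
    ((V S → ℤ) × (V S → ℂ)) → ((V S → ℤ) × (V S → ℂ)) → Prop :=
  Relation.EqvGen (stepRel S)

/-- The vector `z^{(i₀)}` for `i₀ ∈ I_irr ∖ {0}`. -/
def zvec (S : Setup) (i' : Fin (S.p+1)) : V S → ℂ
  | .inl ⟨i, _⟩ => if i.1 = i' then 1 else if i.1 = 0 then -1 else 0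
  | .inr _ => 0


/-!
The vectors `ε_𝐢` and `ε_[i,j,k]` generate the monoid `L⁺`, and they are positive real roots of `Q`:
the support of `ε_𝐢` is a star, so `ε_𝐢` is obtained from a coordinate vector by attaching one
vertex at a time. Suppose more generally that `β ≠ 0` lies in the monoid generated by a set `G` of
positive real roots and pairs nonpositively with `G`. If `(β, ε_a) > 0` for some vertex `a`, then
`ε_a ∉ G`, so `s_a` maps `G` to positive real roots again, and `s_a β` has smaller height than `β`
while satisfying the same assumptions for `s_a G`. The descent ends at a vector `γ` with
`(γ, ε_a) ≤ 0` for all `a`, and it remains to see that the support of `γ` is connected.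

Otherwise `γ` splits into two nonzero parts with orthogonal supports. In terms of the monoid alone,
every summand of the first part is orthogonal to every summand of the second, and this formulation
is carried back to `L⁺` by the reflections. There it says that `δ` and `δ'` in `L⁺`, both pairing
nonpositively with `L⁺`, satisfy `(ε_𝐢, ε_𝐣) = 0` whenever `ε_𝐢 ≤ δ` and `ε_𝐣 ≤ δ'`. Since
`(ε_𝐢, ε_𝐣) = 2 - Σ (2 + d_i(j_i, j'_i))` over the places `i` where `𝐢` and `𝐣` differ, they differ
at a single place `p`, with `d_p = 0`. Exchanging `[p, j'_p]` for `[p, j_p]` raises the pairing with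
`δ` by at least `2 δ_[p,j_p] - δ_[p,j_p,1] > 0`, as `δ` decreases along legs, whereas
`(δ, ε_𝐣) = 0` and `(δ, ε_𝐢) ≤ 0`.
-/
section CartanForm

variable {X : Type*}

section Height

variable [Fintype X]

/-- The height of a vector, the sum of its coordinates: the measure of descent by reflections. -/
def height : (X → ℤ) →ₗ[ℤ] ℤ := ∑ a, LinearMap.proj a

theorem height_apply (v : X → ℤ) : height v = ∑ a, v a := by
  simp only [height, LinearMap.sum_apply, LinearMap.proj_apply]

theorem height_nonneg {v : X → ℤ} (hv : 0 ≤ v) : 0 ≤ height v := by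
  rw [height_apply]
  exact Finset.sum_nonneg fun a _ => hv a

end Height

variable [DecidableEq X] {B : LinearMap.BilinForm ℤ (X → ℤ)}

/-- The coordinate vector of `a`, in the role of a simple root. -/
abbrev simpleRoot (a : X) : X → ℤ := Pi.single a 1

/-- Symmetric bilinear forms on `ℤ^X` whose Gram matrix is a symmetric generalized Cartan matrix,
such as the symmetrized Euler form of a loop-free quiver. -/
structure IsSymmCartanForm (B : LinearMap.BilinForm ℤ (X → ℤ)) : Prop where
  isSymm : B.IsSymm
  self : ∀ a, B (simpleRoot a) (simpleRoot a) = 2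
  nonpos : ∀ a b, a ≠ b → B (simpleRoot a) (simpleRoot b) ≤ 0

/-- The reflection `s_a` of the Weyl group of `B`. -/
def simpleReflection (B : LinearMap.BilinForm ℤ (X → ℤ)) (a : X) : Module.End ℤ (X → ℤ) :=
  Module.preReflection (simpleRoot a) (B (simpleRoot a))

theorem simpleReflection_apply (a : X) (v : X → ℤ) :
    simpleReflection B a v = v - B (simpleRoot a) v • simpleRoot a :=
  Module.preReflection_apply _ _ v

theorem simpleReflection_eq_self {a : X} {v : X → ℤ} (h : B (simpleRoot a) v = 0) :
    simpleReflection B a v = v := by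
  rw [simpleReflection_apply, h, zero_smul, sub_zero]

theorem form_simpleReflection (a : X) (u v : X → ℤ) :
    B u (simpleReflection B a v) = B u v - B (simpleRoot a) v * B u (simpleRoot a) := by
  rw [simpleReflection_apply, map_sub, map_smul, smul_eq_mul]

namespace IsSymmCartanForm

theorem form_comm (hB : IsSymmCartanForm B) (u v : X → ℤ) : B u v = B v u :=
  hB.isSymm.eq u v

theorem form_simpleRoot_simpleReflection (hB : IsSymmCartanForm B) (a : X) (v : X → ℤ) :
    B (simpleRoot a) (simpleReflection B a v) = -B (simpleRoot a) v := by
  rw [form_simpleReflection, hB.self]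
  ring

theorem simpleReflection_simpleReflection (hB : IsSymmCartanForm B) (a : X) (v : X → ℤ) :
    simpleReflection B a (simpleReflection B a v) = v :=
  Module.involutive_preReflection (hB.self a) v

theorem map_simpleReflection_map_simpleReflection (hB : IsSymmCartanForm B) (a : X)
    (M : AddSubmonoid (X → ℤ)) : (M.map (simpleReflection B a)).map (simpleReflection B a) = M := by
  ext v
  simp only [AddSubmonoid.mem_map, exists_exists_and_eq_and,
    hB.simpleReflection_simpleReflection, exists_eq_right]

theorem form_simpleReflection_simpleReflection (hB : IsSymmCartanForm B) (a : X) (u v : X → ℤ) :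
    B (simpleReflection B a u) (simpleReflection B a v) = B u v := by
  rw [form_simpleReflection, hB.form_comm _ v, hB.form_comm _ (simpleRoot a),
    form_simpleReflection, hB.form_simpleRoot_simpleReflection, hB.form_comm v u,
    hB.form_comm v (simpleRoot a)]
  ring

theorem simpleReflection_comm (hB : IsSymmCartanForm B) {a b : X}
    (hab : B (simpleRoot a) (simpleRoot b) = 0) (v : X → ℤ) :
    simpleReflection B a (simpleReflection B b v) =
      simpleReflection B b (simpleReflection B a v) := by
  have hba : B (simpleRoot b) (simpleRoot a) = 0 := (hB.form_comm _ _).trans hab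
  rw [simpleReflection_apply a, simpleReflection_apply b (simpleReflection B a v),
    form_simpleReflection, form_simpleReflection, hab, hba, simpleReflection_apply,
    simpleReflection_apply]
  module

theorem simpleReflection_braid (hB : IsSymmCartanForm B) {a b : X}
    (hab : B (simpleRoot a) (simpleRoot b) = -1) (v : X → ℤ) :
    simpleReflection B a (simpleReflection B b (simpleReflection B a v)) =
      simpleReflection B b (simpleReflection B a (simpleReflection B b v)) := by
  have hba : B (simpleRoot b) (simpleRoot a) = -1 := (hB.form_comm _ _).trans hab
  simp only [simpleReflection_apply, map_sub, map_smul, hab, hba, hB.self]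
  module

end IsSymmCartanForm

/-- The positive real roots that are reached from a simple root by reflections adding a positive
multiple of a simple root at every step. -/
inductive IsPosRealRoot (B : LinearMap.BilinForm ℤ (X → ℤ)) : (X → ℤ) → Prop
  | simple (a : X) : IsPosRealRoot B (simpleRoot a)
  | reflect {α : X → ℤ} (a : X) (hα : IsPosRealRoot B α) (ha : B (simpleRoot a) α < 0) :
      IsPosRealRoot B (simpleReflection B a α)

theorem IsPosRealRoot.nonneg {α : X → ℤ} (hα : IsPosRealRoot B α) : 0 ≤ α := by
  induction hα with
  | simple a => exact Pi.single_nonneg.2 zero_le_one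
  | @reflect α a _ ha ih =>
    rw [simpleReflection_apply, sub_eq_add_neg, ← neg_smul]
    exact add_nonneg ih (smul_nonneg (by lia) (Pi.single_nonneg.2 zero_le_one))

theorem IsPosRealRoot.form_self (hB : IsSymmCartanForm B) {α : X → ℤ} (hα : IsPosRealRoot B α) :
    B α α = 2 := by
  induction hα with
  | simple a => exact hB.self a
  | reflect a _ _ ih => rw [hB.form_simpleReflection_simpleReflection, ih]

theorem nonneg_of_mem_closure {G : Set (X → ℤ)} (hG : ∀ α ∈ G, IsPosRealRoot B α)
    {δ : X → ℤ} (hδ : δ ∈ AddSubmonoid.closure G) : 0 ≤ δ := by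
  have hle : AddSubmonoid.closure G ≤ AddSubmonoid.nonneg (X → ℤ) :=
    AddSubmonoid.closure_le.2 fun α hα => (hG α hα).nonneg
  exact hle hδ

theorem IsPosRealRoot.add_simpleRoot {α : X → ℤ} (hα : IsPosRealRoot B α) {a : X}
    (ha : B (simpleRoot a) α = -1) : IsPosRealRoot B (α + simpleRoot a) := by
  have := hα.reflect a (ha.trans_lt neg_one_lt_zero)
  rwa [simpleReflection_apply, ha, neg_one_smul, sub_neg_eq_add] at this

/-- `C` separates the support of `γ` into two mutually orthogonal parts (one possibly empty). -/
def SplitsSupport (B : LinearMap.BilinForm ℤ (X → ℤ)) (γ : X → ℤ) (C : Set X) : Prop :=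
  ∀ a ∈ C, ∀ b ∉ C, γ a ≠ 0 → γ b ≠ 0 → B (simpleRoot a) (simpleRoot b) = 0

/-- The support of `γ` is connected in the Dynkin diagram of `B`. -/
def HasConnectedSupport (B : LinearMap.BilinForm ℤ (X → ℤ)) (γ : X → ℤ) : Prop :=
  ∀ C : Set X, SplitsSupport B γ C → γ.support ⊆ C ∨ γ.support ⊆ Cᶜ

theorem SplitsSupport.compl {γ : X → ℤ} {C : Set X} (hB : IsSymmCartanForm B)
    (hC : SplitsSupport B γ C) : SplitsSupport B γ Cᶜ := fun a ha b hb hγa hγb =>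
  (hB.form_comm _ _).trans (hC b (not_not.1 hb) a ha hγb hγa)

theorem SplitsSupport.mono {γ δ : X → ℤ} {C : Set X} (hC : SplitsSupport B γ C)
    (h : δ.support ⊆ γ.support) : SplitsSupport B δ C := fun a ha b hb hδa hδb =>
  hC a ha b hb (h hδa) (h hδb)

theorem support_simpleReflection {α : X → ℤ} {a : X} (hα : 0 ≤ α)
    (ha : B (simpleRoot a) α < 0) :
    (simpleReflection B a α).support = insert a α.support := by
  ext b
  have hb := hα b
  simp only [simpleReflection_apply, Function.mem_support, Set.mem_insert_iff, Pi.sub_apply,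
    Pi.smul_apply, Pi.single_apply, smul_eq_mul]
  split_ifs with h <;> simp only [Pi.zero_apply] at hb <;> lia

section FormHeight

variable [Fintype X]

theorem IsPosRealRoot.height_pos (hB : IsSymmCartanForm B) {α : X → ℤ} (hα : IsPosRealRoot B α) :
    0 < height α := by
  have hne : α ≠ 0 := by
    rintro rfl
    exact two_ne_zero ((hα.form_self hB).symm.trans (map_zero _))
  rw [height_apply]
  exact Fintype.sum_pos (hα.nonneg.lt_of_ne' hne)

theorem form_eq_sum (u v : X → ℤ) : B u v = ∑ a, v a * B u (simpleRoot a) := by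
  conv_lhs => rw [← Finset.univ_sum_single v, map_sum]
  refine Finset.sum_congr rfl fun a _ => ?_
  rw [← smul_eq_mul, ← map_smul, ← Pi.single_smul, smul_eq_mul, mul_one]

theorem height_simpleReflection (a : X) (v : X → ℤ) :
    height (simpleReflection B a v) = height v - B (simpleRoot a) v := by
  rw [simpleReflection_apply, map_sub, map_smul, height_apply (simpleRoot a),
    Finset.sum_pi_single', if_pos (Finset.mem_univ a), smul_eq_mul, mul_one]

end FormHeight

section ConnectedSupport

variable [Finite X]

theorem form_eq_zero_of_support (hB : IsSymmCartanForm B) {u v : X → ℤ}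
    (h : ∀ a ∈ u.support, ∀ b ∈ v.support, B (simpleRoot a) (simpleRoot b) = 0) : B u v = 0 := by
  cases nonempty_fintype X
  rw [form_eq_sum]
  refine Finset.sum_eq_zero fun b _ => ?_
  by_cases hb : v b = 0
  · rw [hb, zero_mul]
  rw [hB.form_comm, form_eq_sum, Finset.sum_eq_zero, mul_zero]
  intro a _
  by_cases ha : u a = 0
  · rw [ha, zero_mul]
  · rw [hB.form_comm, h a ha b hb, mul_zero]

theorem form_nonpos_of_antidominant {γ v : X → ℤ} (hB : IsSymmCartanForm B)
    (hγ : ∀ a, B (simpleRoot a) γ ≤ 0) (hv : 0 ≤ v) : B γ v ≤ 0 := by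
  cases nonempty_fintype X
  rw [form_eq_sum]
  refine Finset.sum_nonpos fun a _ => mul_nonpos_of_nonneg_of_nonpos (hv a) ?_
  rw [hB.form_comm]
  exact hγ a

theorem form_simpleRoot_nonpos (hB : IsSymmCartanForm B) {a : X} {v : X → ℤ} (hv : 0 ≤ v)
    (ha : v a = 0) : B (simpleRoot a) v ≤ 0 := by
  cases nonempty_fintype X
  rw [form_eq_sum]
  refine Finset.sum_nonpos fun b _ => ?_
  rcases eq_or_ne a b with rfl | hab
  · rw [ha, zero_mul]
  · exact mul_nonpos_of_nonneg_of_nonpos (hv b) (hB.nonpos a b hab)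

namespace IsPosRealRoot

theorem hasConnectedSupport (hB : IsSymmCartanForm B) {α : X → ℤ} (hα : IsPosRealRoot B α) :
    HasConnectedSupport B α := by
  induction hα with
  | simple a =>
    intro C _
    rw [simpleRoot, Pi.support_single_of_ne one_ne_zero]
    exact (em (a ∈ C)).imp Set.singleton_subset_iff.2 Set.singleton_subset_iff.2
  | @reflect α a hα ha ih =>
    have insert_subset {C : Set X} (hC : SplitsSupport B (simpleReflection B a α) C)
        (hαC : α.support ⊆ C) : (simpleReflection B a α).support ⊆ C := by
      have hsupp := support_simpleReflection hα.nonneg ha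
      rw [hsupp, Set.insert_subset_iff]
      refine ⟨by_contra fun haC => ha.ne ?_, hαC⟩
      refine form_eq_zero_of_support hB fun a' ha' b hb => ?_
      rw [Pi.support_single_of_ne one_ne_zero, Set.mem_singleton_iff] at ha'
      rw [ha', hB.form_comm]
      exact hC b (hαC hb) a haC (hsupp.ge (Set.mem_insert_of_mem a hb))
        (hsupp.ge (Set.mem_insert a _))
    intro C hC
    have hsub : α.support ⊆ (simpleReflection B a α).support :=
      support_simpleReflection hα.nonneg ha ▸ Set.subset_insert a _
    exact (ih C (hC.mono hsub)).imp (insert_subset hC) (insert_subset (hC.compl hB))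

end IsPosRealRoot

end ConnectedSupport

section Descent

variable [Fintype X]

/-- The assertion `IsPosRealRoot.eq_or_simpleReflection` below height `h`: its induction
hypothesis. -/
def DescendsBelow (B : LinearMap.BilinForm ℤ (X → ℤ)) (h : ℤ) : Prop :=
  ∀ ⦃α : X → ℤ⦄ ⦃a : X⦄, IsPosRealRoot B α → height α < h → 0 < B (simpleRoot a) α →
    α = simpleRoot a ∨ IsPosRealRoot B (simpleReflection B a α)

namespace DescendsBelow

variable {h : ℤ} {δ : X → ℤ} {a b : X}

theorem simpleReflection_of_orthogonal (hB : IsSymmCartanForm B) (ih : DescendsBelow B h)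
    (hab : B (simpleRoot a) (simpleRoot b) = 0) (hδ : IsPosRealRoot B δ) (hδh : height δ < h)
    (hb : B (simpleRoot b) δ < 0) (ha : 0 < B (simpleRoot a) (simpleReflection B b δ)) :
    IsPosRealRoot B (simpleReflection B a (simpleReflection B b δ)) := by
  have hba := (hB.form_comm _ _).trans hab
  rw [form_simpleReflection, hab, mul_zero, sub_zero] at ha
  rw [hB.simpleReflection_comm hab]
  rcases ih hδ hδh ha with rfl | hδ'
  · exact absurd hba hb.ne
  · refine hδ'.reflect b ?_
    rwa [form_simpleReflection, hba, mul_zero, sub_zero]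

theorem simpleReflection_of_adjacent (hB : IsSymmCartanForm B) (ih : DescendsBelow B h)
    (hab : B (simpleRoot a) (simpleRoot b) = -1) (hδ : IsPosRealRoot B δ) (hδh : height δ < h)
    (hb : B (simpleRoot b) δ < 0) (ha : 0 < B (simpleRoot a) (simpleReflection B b δ)) :
    IsPosRealRoot B (simpleReflection B a (simpleReflection B b δ)) := by
  have hba : B (simpleRoot b) (simpleRoot a) = -1 := (hB.form_comm _ _).trans hab
  rw [form_simpleReflection, hab] at ha
  rcases ih (a := a) hδ hδh (by lia) with rfl | hδa
  · -- `δ = ε_a`, so `s_a s_b δ = ε_b`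
    suffices simpleReflection B a (simpleReflection B b (simpleRoot a)) = simpleRoot b from
      this ▸ .simple b
    simp only [simpleReflection_apply, map_sub, map_smul, hab, hba, hB.self]
    module
  · have hδab : B (simpleRoot b) (simpleReflection B a δ) =
        B (simpleRoot b) δ + B (simpleRoot a) δ := by
      rw [form_simpleReflection, hba]
      ring
    have hδah : height (simpleReflection B a δ) < h := by
      rw [height_simpleReflection]
      lia
    rcases ih hδa hδah (a := b) (by lia) with heq | hδba
    · have := hB.form_simpleRoot_simpleReflection a δ
      rw [heq, hab] at this
      lia
    · -- `(s_b s_a δ, ε_a) = (δ, ε_b) < 0` and then `(s_a s_b s_a δ, ε_b) = -(δ, ε_a) < 0`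
      have hδbaa : B (simpleRoot a) (simpleReflection B b (simpleReflection B a δ)) =
          B (simpleRoot b) δ := by
        rw [form_simpleReflection, hB.form_simpleRoot_simpleReflection, hδab, hab]
        ring
      have hδaba := hδba.reflect a (hδbaa ▸ hb)
      rw [hB.simpleReflection_braid hab] at hδaba
      have := hδaba.reflect b (by
        rw [hB.form_simpleRoot_simpleReflection, form_simpleReflection,
          hB.form_simpleRoot_simpleReflection, form_simpleReflection b, hab, hba]
        lia)
      rwa [hB.simpleReflection_simpleReflection] at this

theorem form_add_form_nonpos_of_le_neg_two (hB : IsSymmCartanForm B) (ih : DescendsBelow B h)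
    {δ : X → ℤ} {a b : X} (hab : B (simpleRoot a) (simpleRoot b) ≤ -2)
    (hδ : IsPosRealRoot B δ) (hδh : height δ < h) (hb : B (simpleRoot b) δ < 0) :
    B (simpleRoot a) δ + B (simpleRoot b) δ ≤ 0 := by
  by_contra! hlt
  rcases ih (a := a) hδ hδh (by lia) with rfl | hδa
  · rw [hB.self, hB.form_comm] at hlt
    lia
  · -- the same inequalities hold for `s_a δ`, which is lower, with `a` and `b` exchanged
    have hdescent : height (simpleReflection B a δ) < height δ := by
      rw [height_simpleReflection]
      lia
    have := form_add_form_nonpos_of_le_neg_two hB ih (a := b) (b := a)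
      ((hB.form_comm _ _).trans_le hab) hδa
      (hdescent.trans hδh) (by rw [hB.form_simpleRoot_simpleReflection]; lia)
    rw [hB.form_simpleRoot_simpleReflection, form_simpleReflection,
      hB.form_comm (simpleRoot b) (simpleRoot a)] at this
    nlinarith
termination_by (height δ).toNat
decreasing_by
  have := height_nonneg hδa.nonneg
  lia

theorem simpleReflection_of_ascent (hB : IsSymmCartanForm B) (ih : DescendsBelow B h)
    (hδ : IsPosRealRoot B δ) (hδh : height δ < h) (hb : B (simpleRoot b) δ < 0)
    (ha : 0 < B (simpleRoot a) (simpleReflection B b δ)) :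
    IsPosRealRoot B (simpleReflection B a (simpleReflection B b δ)) := by
  rcases eq_or_ne a b with rfl | hne
  · rwa [hB.simpleReflection_simpleReflection]
  have hab := hB.nonpos a b hne
  obtain hab | hab | hab : B (simpleRoot a) (simpleRoot b) = 0 ∨
    B (simpleRoot a) (simpleRoot b) = -1 ∨ B (simpleRoot a) (simpleRoot b) ≤ -2 := by lia
  · exact ih.simpleReflection_of_orthogonal hB hab hδ hδh hb ha
  · exact ih.simpleReflection_of_adjacent hB hab hδ hδh hb ha
  · have := ih.form_add_form_nonpos_of_le_neg_two hB hab hδ hδh hb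
    rw [form_simpleReflection] at ha
    nlinarith

end DescendsBelow

end Descent

section PositiveRealRoots

variable [Finite X]

namespace IsPosRealRoot

theorem eq_or_simpleReflection (hB : IsSymmCartanForm B) {α : X → ℤ} {a : X}
    (hα : IsPosRealRoot B α) (ha : 0 < B (simpleRoot a) α) :
    α = simpleRoot a ∨ IsPosRealRoot B (simpleReflection B a α) := by
  cases nonempty_fintype X
  induction hn : (height α).toNat using Nat.strong_induction_on generalizing α a with
  | _ n ih =>
  cases hα with
  | simple b =>
    left
    by_contra hne
    exact (hB.nonpos a b fun hab => hne (hab ▸ rfl)).not_gt ha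
  | @reflect δ b hδ hb =>
    right
    have hbelow : DescendsBelow B (height (simpleReflection B b δ)) := fun α' a' hα' hlt ha' => by
      have := height_nonneg hα'.nonneg
      exact ih _ (by lia) hα' ha' rfl
    exact hbelow.simpleReflection_of_ascent hB hδ (by rw [height_simpleReflection]; lia) hb ha

theorem simpleReflection_of_ne (hB : IsSymmCartanForm B) {α : X → ℤ} {a : X}
    (hα : IsPosRealRoot B α) (hne : α ≠ simpleRoot a) :
    IsPosRealRoot B (simpleReflection B a α) := by
  rcases lt_trichotomy (B (simpleRoot a) α) 0 with ha | ha | ha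
  · exact hα.reflect a ha
  · rwa [simpleReflection_eq_self ha]
  · exact (hα.eq_or_simpleReflection hB ha).resolve_left hne

end IsPosRealRoot

end PositiveRealRoots

/-- Membership in the fundamental set of `B`, whose Weyl images are the positive imaginary
roots. -/
structure IsFundamental (B : LinearMap.BilinForm ℤ (X → ℤ)) (γ : X → ℤ) : Prop where
  ne_zero : γ ≠ 0
  nonneg : 0 ≤ γ
  connected : HasConnectedSupport B γ
  antidominant : ∀ a, B (simpleRoot a) γ ≤ 0

/-- Two nonzero elements of the monoid `M` which pair nonpositively with `M`, and such that every
summand of the first is orthogonal to every summand of the second. An antidominant vector with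
disconnected support splits in this way, and unlike supports the notion is transported by
reflections. -/
structure IsOrthogonalSplitting (B : LinearMap.BilinForm ℤ (X → ℤ)) (M : AddSubmonoid (X → ℤ))
    (β γ : X → ℤ) : Prop where
  left_mem : β ∈ M
  right_mem : γ ∈ M
  left_ne_zero : β ≠ 0
  right_ne_zero : γ ≠ 0
  left_nonpos : ∀ u ∈ M, B β u ≤ 0
  right_nonpos : ∀ u ∈ M, B γ u ≤ 0
  orthogonal : ∀ u ∈ M, ∀ v ∈ M, β - u ∈ M → γ - v ∈ M → B u v = 0

theorem IsOrthogonalSplitting.map_simpleReflection (hB : IsSymmCartanForm B)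
    {M : AddSubmonoid (X → ℤ)} {β γ : X → ℤ} (h : IsOrthogonalSplitting B M β γ) (a : X) :
    IsOrthogonalSplitting B (M.map (simpleReflection B a)) (simpleReflection B a β)
      (simpleReflection B a γ) := by
  have hinj : Function.Injective (simpleReflection B a) :=
    Function.Involutive.injective (hB.simpleReflection_simpleReflection a)
  refine ⟨AddSubmonoid.mem_map_of_mem _ h.left_mem, AddSubmonoid.mem_map_of_mem _ h.right_mem,
    (map_ne_zero_iff _ hinj).2 h.left_ne_zero, (map_ne_zero_iff _ hinj).2 h.right_ne_zero,
    ?_, ?_, ?_⟩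
  · rintro _ ⟨u, hu, rfl⟩
    exact (hB.form_simpleReflection_simpleReflection a β u).trans_le (h.left_nonpos u hu)
  · rintro _ ⟨u, hu, rfl⟩
    exact (hB.form_simpleReflection_simpleReflection a γ u).trans_le (h.right_nonpos u hu)
  · rintro _ ⟨u, hu, rfl⟩ _ ⟨v, hv, rfl⟩ hβu hγv
    rw [← map_sub, AddSubmonoid.mem_map_iff_mem hinj] at hβu hγv
    exact (hB.form_simpleReflection_simpleReflection a u v).trans
      (h.orthogonal u hu v hv hβu hγv)

section Generators

variable [Finite X] {G : Set (X → ℤ)}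

theorem indicator_mem_closure (hB : IsSymmCartanForm B) (hG : ∀ α ∈ G, IsPosRealRoot B α)
    {C : Set X} {δ : X → ℤ} (hδ : δ ∈ AddSubmonoid.closure G) (hC : SplitsSupport B δ C) :
    C.indicator δ ∈ AddSubmonoid.closure G := by
  induction hδ using AddSubmonoid.closure_induction with
  | mem α hα =>
    rcases (hG α hα).hasConnectedSupport hB C hC with hαC | hαC
    · rw [Set.indicator_eq_self.2 hαC]
      exact AddSubmonoid.subset_closure hα
    · rw [Set.indicator_eq_zero'.2 (Set.subset_compl_iff_disjoint_right.1 hαC)]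
      exact zero_mem _
  | zero => simpa only [Set.indicator_zero'] using zero_mem _
  | add x y hx hy ihx ihy =>
    have hx0 := nonneg_of_mem_closure hG hx
    have hy0 := nonneg_of_mem_closure hG hy
    rw [Set.indicator_add']
    refine add_mem (ihx (hC.mono fun a ha => ?_)) (ihy (hC.mono fun a ha => ?_)) <;>
    · have hxa := hx0 a
      have hya := hy0 a
      simp only [Function.mem_support, Pi.add_apply, Pi.zero_apply] at ha hxa hya ⊢
      lia

theorem indicator_antidominant (hB : IsSymmCartanForm B) {C : Set X} {γ : X → ℤ} (hγ0 : 0 ≤ γ)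
    (hγ : ∀ a, B (simpleRoot a) γ ≤ 0) (hC : SplitsSupport B γ C) (a : X) :
    B (simpleRoot a) (C.indicator γ) ≤ 0 := by
  by_cases ha : C.indicator γ a = 0
  · exact form_simpleRoot_nonpos hB (Set.indicator_nonneg fun b _ => hγ0 b) ha
  obtain ⟨haC, hγa⟩ : a ∈ C ∧ γ a ≠ 0 := Set.indicator_apply_ne_zero.1 ha
  have hcompl : B (simpleRoot a) (Cᶜ.indicator γ) = 0 := by
    refine form_eq_zero_of_support hB fun a' ha' b hb => ?_
    rw [Pi.support_single_of_ne one_ne_zero, Set.mem_singleton_iff] at ha'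
    obtain ⟨hbC, hγb⟩ := Set.indicator_apply_ne_zero.1 hb
    exact ha' ▸ hC a haC b hbC hγa hγb
  calc B (simpleRoot a) (C.indicator γ)
      = B (simpleRoot a) (C.indicator γ + Cᶜ.indicator γ) := by rw [map_add, hcompl, add_zero]
    _ = B (simpleRoot a) γ := by rw [Set.indicator_self_add_compl]
    _ ≤ 0 := hγ a

theorem isOrthogonalSplitting_indicator (hB : IsSymmCartanForm B)
    (hG : ∀ α ∈ G, IsPosRealRoot B α) {C : Set X} {γ : X → ℤ}
    (hγG : γ ∈ AddSubmonoid.closure G) (hγ : ∀ a, B (simpleRoot a) γ ≤ 0)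
    (hC : SplitsSupport B γ C) (hγC : ¬γ.support ⊆ C) (hγC' : ¬γ.support ⊆ Cᶜ) :
    IsOrthogonalSplitting B (AddSubmonoid.closure G) (C.indicator γ) (Cᶜ.indicator γ) where
  left_mem := indicator_mem_closure hB hG hγG hC
  right_mem := indicator_mem_closure hB hG hγG (hC.compl hB)
  left_ne_zero := fun h =>
    hγC' (Set.subset_compl_iff_disjoint_right.2 (Set.indicator_eq_zero'.1 h))
  right_ne_zero := fun h =>
    hγC (Set.disjoint_compl_right_iff_subset.1 (Set.indicator_eq_zero'.1 h))
  left_nonpos := fun _ hu => form_nonpos_of_antidominant hB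
    (indicator_antidominant hB (nonneg_of_mem_closure hG hγG) hγ hC) (nonneg_of_mem_closure hG hu)
  right_nonpos := fun _ hu => form_nonpos_of_antidominant hB
    (indicator_antidominant hB (nonneg_of_mem_closure hG hγG) hγ (hC.compl hB))
    (nonneg_of_mem_closure hG hu)
  orthogonal := by
    intro u hu v hv hβu hγv
    have hu0 := nonneg_of_mem_closure hG hu
    have hv0 := nonneg_of_mem_closure hG hv
    have hβu0 := nonneg_of_mem_closure hG hβu
    have hγv0 := nonneg_of_mem_closure hG hγv
    have support_le {w : X → ℤ} {D : Set X} (hw : 0 ≤ w) (hwD : 0 ≤ D.indicator γ - w) {a : X}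
        (ha : a ∈ w.support) : a ∈ D ∧ γ a ≠ 0 := by
      refine Set.indicator_apply_ne_zero.1 (((hw a).lt_of_ne' ha).trans_le ?_).ne'
      exact sub_nonneg.1 (hwD a)
    refine form_eq_zero_of_support hB fun a ha b hb => ?_
    obtain ⟨haC, hγa⟩ := support_le hu0 hβu0 ha
    obtain ⟨hbC, hγb⟩ := support_le hv0 hγv0 hb
    exact hC a haC b hbC hγa hγb

theorem exists_isFundamental (hB : IsSymmCartanForm B) (hG : ∀ α ∈ G, IsPosRealRoot B α)
    {β : X → ℤ} (hβ : β ∈ AddSubmonoid.closure G) (hne : β ≠ 0)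
    (hβG : ∀ α ∈ G, B β α ≤ 0)
    (hsplit : ∀ β₁ β₂, ¬IsOrthogonalSplitting B (AddSubmonoid.closure G) β₁ β₂) :
    ∃ (l : List X) (γ : X → ℤ), IsFundamental B γ ∧
      β = l.foldr (fun a v => simpleReflection B a v) γ := by
  cases nonempty_fintype X
  induction hn : (height β).toNat using Nat.strong_induction_on generalizing G β with
  | _ n ih =>
  by_cases! hanti : ∀ a, B (simpleRoot a) β ≤ 0
  · refine ⟨[], β, ⟨hne, nonneg_of_mem_closure hG hβ, fun C hC => ?_, hanti⟩, rfl⟩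
    by_contra! h
    exact hsplit _ _ (isOrthogonalSplitting_indicator hB hG hβ hanti hC h.1 h.2)
  · obtain ⟨a, ha⟩ := hanti
    have hinv := hB.simpleReflection_simpleReflection a
    have hG' : ∀ α ∈ simpleReflection B a '' G, IsPosRealRoot B α := by
      rintro _ ⟨α, hα, rfl⟩
      refine (hG α hα).simpleReflection_of_ne hB fun h => (hβG α hα).not_gt ?_
      rwa [h, hB.form_comm]
    have hmap : (AddSubmonoid.closure G).map (simpleReflection B a) =
        AddSubmonoid.closure (simpleReflection B a '' G) := AddMonoidHom.map_mclosure _ _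
    have hβ' : simpleReflection B a β ∈ AddSubmonoid.closure (simpleReflection B a '' G) :=
      hmap ▸ AddSubmonoid.mem_map_of_mem _ hβ
    have hne' : simpleReflection B a β ≠ 0 := fun h => hne (by rw [← hinv β, h, map_zero])
    have hβG' : ∀ α ∈ simpleReflection B a '' G, B (simpleReflection B a β) α ≤ 0 := by
      rintro _ ⟨α, hα, rfl⟩
      exact (hB.form_simpleReflection_simpleReflection a β α).trans_le (hβG α hα)
    have hsplit' (β₁ β₂) :
        ¬IsOrthogonalSplitting B (AddSubmonoid.closure (simpleReflection B a '' G)) β₁ β₂ := by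
      intro h
      have h := h.map_simpleReflection hB a
      rw [← hmap, hB.map_simpleReflection_map_simpleReflection] at h
      exact hsplit _ _ h
    have hheight : (height (simpleReflection B a β)).toNat < n := by
      have := height_nonneg (nonneg_of_mem_closure hG' hβ')
      rw [height_simpleReflection] at this ⊢
      lia
    obtain ⟨l, γ, hγ, hl⟩ := ih _ hheight hG' hβ' hne' hβG' hsplit' rfl
    exact ⟨a :: l, γ, hγ, by rw [List.foldr_cons, ← hl, hinv]⟩

end Generators

end CartanForm

section QuiverForm

variable (S : Setup)

/-- The generalized Cartan matrix of the quiver `Q`: the Gram matrix of `(·,·)`. -/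
def cartanMatrix : Matrix (V S) (V S) ℤ :=
  Matrix.of fun a b => (if a = b then 2 else 0) - arr S a b - arr S b a

/-- The symmetrized Euler form `bform` as a bilinear form. -/
def quiverForm : LinearMap.BilinForm ℤ (V S → ℤ) := Matrix.toBilin' (cartanMatrix S)

theorem quiverForm_simpleRoot (a b : V S) :
    quiverForm S (simpleRoot a) (simpleRoot b) = cartanMatrix S a b :=
  Matrix.toBilin'_single _ _ _

theorem quiverForm_apply (β γ : V S → ℤ) : quiverForm S β γ = bform S β γ := by
  have hsymm : ∑ a, ∑ b, (arr S b a : ℤ) * β a * γ b = ∑ a, ∑ b, (arr S a b : ℤ) * γ a * β b := by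
    rw [Finset.sum_comm]
    refine Finset.sum_congr rfl fun a _ => Finset.sum_congr rfl fun b _ => ?_
    ring
  have hentry (a b : V S) : β a * cartanMatrix S a b * γ b =
      (if a = b then 2 * (β a * γ b) else 0) -
        (arr S a b : ℤ) * β a * γ b - (arr S b a : ℤ) * β a * γ b := by
    simp only [cartanMatrix, Matrix.of_apply]
    split_ifs <;> ring
  simp only [quiverForm, Matrix.toBilin'_apply, hentry, Finset.sum_sub_distrib, Finset.sum_ite_eq,
    Finset.mem_univ, if_true, ← Finset.mul_sum, hsymm, bform, eform, mul_comm (γ _) (β _)]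
  ring

theorem eps_eq_simpleRoot (a : V S) : eps S a = simpleRoot a := by
  ext b
  rw [eps, simpleRoot, Pi.single_apply]

theorem arr_self (a : V S) : arr S a a = 0 := by
  rcases a with ⟨i, j⟩ | ⟨i, j, κ⟩ <;> simp [arr]

theorem isSymmCartanForm_quiverForm : IsSymmCartanForm (quiverForm S) where
  isSymm := ⟨fun β γ => by
    rw [quiverForm_apply, quiverForm_apply, bform, bform, add_comm]⟩
  self a := by
    rw [quiverForm_simpleRoot, cartanMatrix, Matrix.of_apply, if_pos rfl, arr_self]
    norm_num
  nonpos a b hab := by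
    rw [quiverForm_simpleRoot, cartanMatrix, Matrix.of_apply, if_neg hab]
    lia

theorem quiverForm_simpleRoot_right (β : V S → ℤ) (b : V S) :
    quiverForm S β (simpleRoot b) = ∑ a, β a * cartanMatrix S a b := by
  rw [(isSymmCartanForm_quiverForm S).form_comm, form_eq_sum]
  refine Finset.sum_congr rfl fun a _ => ?_
  rw [(isSymmCartanForm_quiverForm S).form_comm, quiverForm_simpleRoot]

theorem quiverForm_simpleRoot_eq_sub_sum_arr (β : V S → ℤ) (b : V S) :
    quiverForm S β (simpleRoot b) =
      2 * β b - ∑ a, (arr S b a : ℤ) * β a - ∑ a, (arr S a b : ℤ) * β a := by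
  have hentry (a : V S) : β a * cartanMatrix S a b =
      (if a = b then 2 * β a else 0) - (arr S b a : ℤ) * β a - (arr S a b : ℤ) * β a := by
    rw [cartanMatrix, Matrix.of_apply]
    split_ifs <;> ring
  simp only [quiverForm_simpleRoot_right, hentry, Finset.sum_sub_distrib, Finset.sum_ite_eq',
    Finset.mem_univ, if_true]

theorem reflList_eq_foldr (l : List (V S)) (β : V S → ℤ) :
    reflList S l β = l.foldr (fun a v => simpleReflection (quiverForm S) a v) β := by
  have hrefl : refl1 S = fun a v => simpleReflection (quiverForm S) a v := by
    ext a v b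
    rw [simpleReflection_apply, (isSymmCartanForm_quiverForm S).form_comm, quiverForm_apply,
      ← eps_eq_simpleRoot]
    rfl
  rw [reflList, hrefl]

variable {S}

theorem HasConnectedSupport.connSupp {γ : V S → ℤ} (hγ : HasConnectedSupport (quiverForm S) γ) :
    connSupp S γ := by
  intro a ha b hb
  let R (x y : V S) : Prop := 0 < arr S x y + arr S y x ∧ x ∈ supp S γ ∧ y ∈ supp S γ
  let C : Set (V S) := {c | Relation.ReflTransGen R a c}
  have hC : SplitsSupport (quiverForm S) γ C := by
    intro x hx y hy hγx hγy
    by_contra hxy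
    rw [quiverForm_simpleRoot, cartanMatrix, Matrix.of_apply,
      if_neg fun h : x = y => hy (h ▸ hx)] at hxy
    exact hy (Relation.ReflTransGen.tail hx ⟨by lia, hγx, hγy⟩)
  exact (hγ C hC).resolve_right (fun h => h ha .refl) hb

theorem IsFundamental.fund {γ : V S → ℤ} (hγ : IsFundamental (quiverForm S) γ) : fund S γ :=
  ⟨hγ.ne_zero, hγ.nonneg, hγ.connected.connSupp, fun a => by
    rw [← quiverForm_apply, eps_eq_simpleRoot, (isSymmCartanForm_quiverForm S).form_comm]
    exact hγ.antidominant a⟩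

end QuiverForm

section Tuples

variable {S : Setup}

theorem dcnt_comm (i : Fin (S.p + 1)) (j j' : Fin (S.m i)) : dcnt S i j j' = dcnt S i j' j := by
  rw [dcnt, dcnt, Polynomial.natDegree_sub]

theorem dcnt_eq_zero_trans {i : Fin (S.p + 1)} {j j' l : Fin (S.m i)} (h : dcnt S i j l = 0)
    (h' : dcnt S i l j' = 0) : dcnt S i j j' = 0 := by
  have := Polynomial.natDegree_add_le (S.q i j - S.q i l) (S.q i l - S.q i j')
  rw [sub_add_sub_cancel] at this
  rw [dcnt] at h h' ⊢
  lia

theorem vI_injective (i : {i : Fin (S.p + 1) // Iirr S i}) : Function.Injective (vI S i) :=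
  Sum.inl_injective.comp sigma_mk_injective

theorem cartanMatrix_vI_of_ne_right {i : {i : Fin (S.p + 1) // Iirr S i}} {j j' : Fin (S.m i.1)}
    (h : j ≠ j') : cartanMatrix S (vI S i j) (vI S i j') = -dcnt S i.1 j j' := by
  rw [cartanMatrix, Matrix.of_apply, if_neg fun heq => h (vI_injective i heq)]
  rcases lt_or_gt_of_ne h with hlt | hlt
  · simp [arr, vI, hlt, hlt.le]
  · simp [arr, vI, hlt, hlt.le, dcnt_comm i.1 j j']

theorem cartanMatrix_vI_of_ne_left {i i' : {i : Fin (S.p + 1) // Iirr S i}} (h : i ≠ i')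
    (j : Fin (S.m i.1)) (j' : Fin (S.m i'.1)) :
    cartanMatrix S (vI S i j) (vI S i' j') = if i = i0 S ∨ i' = i0 S then -1 else 0 := by
  have hval : i.1 ≠ i'.1 := fun heq => h (Subtype.ext heq)
  have hi (k : {i : Fin (S.p + 1) // Iirr S i}) : k = i0 S ↔ k.1 = 0 := Subtype.ext_iff
  have hne : vI S i j ≠ vI S i' j' := fun heq => h (Sigma.mk.inj (Sum.inl.inj heq)).1
  rw [cartanMatrix, Matrix.of_apply, if_neg hne]
  simp only [arr, vI, dif_neg h, dif_neg h.symm, hi]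
  by_cases h0 : i.1 = 0 <;> by_cases h0' : i'.1 = 0 <;> simp_all

theorem epsJ_eq_sum (I : ∀ i, Fin (S.m i)) :
    epsJ S I = ∑ i : {i : Fin (S.p + 1) // Iirr S i}, simpleRoot (vI S i (I i.1)) := by
  ext a
  rw [Finset.sum_apply]
  rcases a with ⟨i, j⟩ | a
  · rw [Finset.sum_eq_single i]
    · simp [epsJ, vI, Pi.single_apply, Fin.ext_iff]
    · intro i' _ hne
      exact Pi.single_eq_of_ne (fun heq => hne (Sigma.mk.inj (Sum.inl.inj heq)).1.symm) _
    · exact fun h => absurd (Finset.mem_univ i) h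
  · exact (Finset.sum_eq_zero fun i _ => Pi.single_eq_of_ne Sum.inr_ne_inl _).symm

theorem isPosRealRoot_epsJ (I : ∀ i, Fin (S.m i)) : IsPosRealRoot (quiverForm S) (epsJ S I) := by
  -- attach the vertices `[i, I i]`, `i ≠ 0`, one by one to the central vertex `[0, I 0]`
  have hstar (t : Finset {i : Fin (S.p + 1) // Iirr S i}) (ht : i0 S ∉ t) :
      IsPosRealRoot (quiverForm S) (simpleRoot (vI S (i0 S) (I (i0 S).1)) +
        ∑ i ∈ t, simpleRoot (vI S i (I i.1))) := by
    induction t using Finset.induction_on with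
    | empty =>
      rw [Finset.sum_empty, add_zero]
      exact .simple _
    | insert k t hk ih =>
      obtain ⟨hk0, ht⟩ := not_or.1 (Finset.mem_insert.not.1 ht)
      rw [Finset.sum_insert hk, add_comm (simpleRoot (vI S k _)), ← add_assoc]
      refine (ih ht).add_simpleRoot ?_
      simp only [map_add, map_sum, quiverForm_simpleRoot]
      rw [cartanMatrix_vI_of_ne_left (Ne.symm hk0), if_pos (.inr rfl), Finset.sum_eq_zero, add_zero]
      intro i hi
      have hik : i ≠ k := fun h => hk (h ▸ hi)
      have hi0 : i ≠ i0 S := fun h => ht (h ▸ hi)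
      rw [cartanMatrix_vI_of_ne_left hik.symm, if_neg (not_or.2 ⟨Ne.symm hk0, hi0⟩)]
  rw [epsJ_eq_sum, ← Finset.add_sum_erase _ _ (Finset.mem_univ (i0 S))]
  exact hstar _ (Finset.notMem_erase _ _)

theorem form_epsJ_epsJ (I J : ∀ i, Fin (S.m i)) :
    quiverForm S (epsJ S I) (epsJ S J) =
      2 - ∑ i : {i : Fin (S.p + 1) // Iirr S i},
        (2 - cartanMatrix S (vI S i (I i.1)) (vI S i (J i.1))) := by
  have hdiff : quiverForm S (epsJ S I) (epsJ S I) - quiverForm S (epsJ S I) (epsJ S J) =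
      ∑ i : {i : Fin (S.p + 1) // Iirr S i},
        (2 - cartanMatrix S (vI S i (I i.1)) (vI S i (J i.1))) := by
    simp only [epsJ_eq_sum, map_sum, LinearMap.sum_apply, quiverForm_simpleRoot,
      ← Finset.sum_sub_distrib]
    refine Finset.sum_congr rfl fun i _ => ?_
    rw [Finset.sum_eq_single i]
    · rw [← quiverForm_simpleRoot, (isSymmCartanForm_quiverForm S).self]
    · intro k _ hki
      rw [cartanMatrix_vI_of_ne_left hki, cartanMatrix_vI_of_ne_left hki, sub_self]
    · exact fun h => absurd (Finset.mem_univ i) h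
  rw [← hdiff, (isPosRealRoot_epsJ I).form_self (isSymmCartanForm_quiverForm S), sub_sub_cancel]

theorem exists_differ_only_at_of_form_epsJ_eq_zero {I J : ∀ i, Fin (S.m i)}
    (h : quiverForm S (epsJ S I) (epsJ S J) = 0) :
    ∃ p : {i : Fin (S.p + 1) // Iirr S i}, I p.1 ≠ J p.1 ∧ dcnt S p.1 (I p.1) (J p.1) = 0 ∧
      ∀ i : {i : Fin (S.p + 1) // Iirr S i}, i ≠ p → I i.1 = J i.1 := by
  let f (i : {i : Fin (S.p + 1) // Iirr S i}) : ℤ :=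
    2 - cartanMatrix S (vI S i (I i.1)) (vI S i (J i.1))
  have hf_eq {i} (hi : I i.1 = J i.1) : f i = 0 := by
    simp only [f, hi, ← quiverForm_simpleRoot, (isSymmCartanForm_quiverForm S).self, sub_self]
  have hf_ne {i} (hi : I i.1 ≠ J i.1) : f i = 2 + dcnt S i.1 (I i.1) (J i.1) := by
    simp only [f, cartanMatrix_vI_of_ne_right hi, sub_neg_eq_add]
  have hf0 (i) : 0 ≤ f i := by
    by_cases hi : I i.1 = J i.1
    · rw [hf_eq hi]
    · rw [hf_ne hi]
      lia
  have hsum : ∑ i, f i = 2 := by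
    rw [form_epsJ_epsJ] at h
    lia
  obtain ⟨p, -, hp⟩ := Finset.exists_ne_zero_of_sum_ne_zero (hsum.trans_ne two_ne_zero)
  have hIJp : I p.1 ≠ J p.1 := mt hf_eq hp
  have herase := Finset.add_sum_erase _ f (Finset.mem_univ p)
  have herase0 : 0 ≤ ∑ i ∈ Finset.univ.erase p, f i := Finset.sum_nonneg fun i _ => hf0 i
  rw [hsum, hf_ne hIJp] at herase
  refine ⟨p, hIJp, by lia, fun i hip => by_contra fun hi => ?_⟩
  have hle := Finset.single_le_sum (fun i _ => hf0 i) (Finset.mem_erase.2 ⟨hip, Finset.mem_univ i⟩)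
  rw [hf_ne hi] at hle
  lia

end Tuples

section Legs

variable {S : Setup}

/-- The coordinates of `β` along the leg `[i,j,1], [i,j,2], …`, extended by zero. The value at `0`
belongs to the base of the leg: it is `β_[i,j]` for `i ∈ I_irr`, and `Σ_j' β_[0,j']` for
`i ∈ I_reg`, where the leg is attached to all the vertices `[0,j']`. -/
def legProfile (β : V S → ℤ) (i : Fin (S.p + 1)) (j : Fin (S.m i)) : ℕ → ℤ
  | 0 => if h : Iirr S i then β (vI S ⟨i, h⟩ j) else ∑ j', β (v0 S j')
  | k + 1 => if h : k < S.e i j - 1 then β (.inr ⟨i, j, ⟨k, h⟩⟩) else 0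

variable {β : V S → ℤ}

theorem legProfile_zero (i : {i : Fin (S.p + 1) // Iirr S i}) (j : Fin (S.m i.1)) :
    legProfile β i.1 j 0 = β (vI S i j) :=
  dif_pos i.2

theorem legProfile_succ (i : Fin (S.p + 1)) (j : Fin (S.m i)) (κ : Fin (S.e i j - 1)) :
    legProfile β i j (κ + 1) = β (.inr ⟨i, j, κ⟩) :=
  dif_pos κ.2

theorem legProfile_eq_zero {i : Fin (S.p + 1)} {j : Fin (S.m i)} {k : ℕ} (hk : S.e i j - 1 ≤ k) :
    legProfile β i j (k + 1) = 0 :=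
  dif_neg hk.not_gt

theorem legProfile_nonneg (h0 : 0 ≤ β) (i : Fin (S.p + 1)) (j : Fin (S.m i)) (k : ℕ) :
    0 ≤ legProfile β i j k := by
  rcases k with _ | k <;> rw [legProfile] <;> split_ifs
  · exact h0 _
  · exact Finset.sum_nonneg fun j' _ => h0 _
  · exact h0 _
  · exact le_rfl

theorem sum_ite_leg (i : Fin (S.p + 1)) (j : Fin (S.m i)) (k : ℕ) :
    ∑ r : Vr S, (if r.1 = i ∧ (r.2.1 : ℕ) = j ∧ (r.2.2 : ℕ) = k then β (.inr r) else 0) =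
      legProfile β i j (k + 1) := by
  rw [legProfile]
  split_ifs with h
  · rw [Fintype.sum_eq_single ⟨i, j, ⟨k, h⟩⟩, if_pos ⟨rfl, rfl, rfl⟩]
    rintro ⟨i', j', κ⟩ hne
    refine if_neg ?_
    rintro ⟨rfl, hj, rfl⟩
    obtain rfl := Fin.ext hj
    exact hne rfl
  · refine Finset.sum_eq_zero ?_
    rintro ⟨i', j', κ⟩ -
    refine if_neg ?_
    rintro ⟨rfl, hj, rfl⟩
    obtain rfl := Fin.ext hj
    exact h κ.2

theorem sum_arr_out_of_leg_base {i : Fin (S.p + 1)} {j : Fin (S.m i)} {κ : Fin (S.e i j - 1)}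
    (hκ : (κ : ℕ) = 0) :
    ∑ v : Vb S, (arr S (.inr ⟨i, j, κ⟩) (.inl v) : ℤ) * β (.inl v) = legProfile β i j 0 := by
  rw [legProfile]
  split_ifs with h
  · rw [Fintype.sum_eq_single ⟨⟨i, h⟩, j⟩]
    · simp [arr, vI, h, hκ]
    rintro ⟨i', j'⟩ hne
    have hij : ¬(i = i'.1 ∧ (j : ℕ) = j') := by
      rintro ⟨rfl, hj⟩
      obtain rfl := Fin.ext hj
      exact hne rfl
    simp only [arr, hκ, h, hij, not_true, and_true, false_and, if_false]
    exact zero_mul _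
  · have hj : (j : ℕ) = 0 := by
      have := j.2
      have := not_or.1 h
      lia
    have hi (i' : {i : Fin (S.p + 1) // Iirr S i}) : i ≠ i'.1 := fun heq => h (heq ▸ i'.2)
    have h0 : i ≠ 0 := hi (i0 S)
    rw [Fintype.sum_sigma, Fintype.sum_eq_single (i0 S)]
    · exact Finset.sum_congr rfl fun j' _ => by simp [arr, v0, i0, h, hj, hκ, h0]
    · intro i' hi'
      have hi0 : i'.1 ≠ 0 := fun heq => hi' (Subtype.ext heq)
      simp [arr, hi i', hi0]

theorem sum_arr_out_of_leg (i : Fin (S.p + 1)) (j : Fin (S.m i)) (κ : Fin (S.e i j - 1)) :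
    ∑ a, (arr S (.inr ⟨i, j, κ⟩) a : ℤ) * β a = legProfile β i j κ := by
  rw [Fintype.sum_sum_type]
  obtain ⟨_ | k, hk⟩ := κ
  · rw [sum_arr_out_of_leg_base rfl, Finset.sum_eq_zero (fun r _ => by simp [arr]), add_zero]
  · have hl (v : Vb S) : arr S (.inr ⟨i, j, ⟨k + 1, hk⟩⟩) (.inl v) = 0 := by simp [arr]
    have hr (r : Vr S) : (arr S (.inr ⟨i, j, ⟨k + 1, hk⟩⟩) (.inr r) : ℤ) * β (.inr r) =
        if r.1 = i ∧ (r.2.1 : ℕ) = j ∧ (r.2.2 : ℕ) = k then β (.inr r) else 0 := by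
      simp only [arr, Nat.cast_ite, Nat.cast_one, Nat.cast_zero, ite_mul, one_mul, zero_mul,
        add_left_inj, eq_comm]
    simp only [hl, hr, Nat.cast_zero, zero_mul, Finset.sum_const_zero, zero_add, sum_ite_leg]

theorem sum_arr_into_leg (i : Fin (S.p + 1)) (j : Fin (S.m i)) (κ : Fin (S.e i j - 1)) :
    ∑ a, (arr S a (.inr ⟨i, j, κ⟩) : ℤ) * β a = legProfile β i j (κ + 2) := by
  have hl (v : Vb S) : arr S (.inl v) (.inr ⟨i, j, κ⟩) = 0 := rfl
  have hr (r : Vr S) : (arr S (.inr r) (.inr ⟨i, j, κ⟩) : ℤ) * β (.inr r) =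
      if r.1 = i ∧ (r.2.1 : ℕ) = j ∧ (r.2.2 : ℕ) = κ + 1 then β (.inr r) else 0 := by
    simp only [arr, Nat.cast_ite, Nat.cast_one, Nat.cast_zero, ite_mul, one_mul, zero_mul]
  rw [Fintype.sum_sum_type, ← sum_ite_leg]
  simp only [hl, hr, Nat.cast_zero, zero_mul, Finset.sum_const_zero, zero_add]

theorem quiverForm_simpleRoot_leg (i : Fin (S.p + 1)) (j : Fin (S.m i)) (κ : Fin (S.e i j - 1)) :
    quiverForm S β (simpleRoot (.inr ⟨i, j, κ⟩)) =
      2 * legProfile β i j (κ + 1) - legProfile β i j κ - legProfile β i j (κ + 2) := by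
  rw [quiverForm_simpleRoot_eq_sub_sum_arr, sum_arr_out_of_leg, sum_arr_into_leg, legProfile_succ]

theorem antitone_of_convex_of_eventually_zero {f : ℕ → ℤ} {N : ℕ}
    (hconvex : ∀ k, 2 * f (k + 1) ≤ f k + f (k + 2)) (hzero : ∀ k, N ≤ k → f k = 0) :
    Antitone f := by
  have hdiff : Antitone fun k => f k - f (k + 1) := antitone_nat_of_succ_le fun k => by
    have := hconvex k
    lia
  refine antitone_nat_of_succ_le fun k => ?_
  have hle := hdiff (le_max_left k N)
  have hk := le_max_right k N
  simp only [hzero _ hk, hzero _ (hk.trans (Nat.le_succ _)), sub_zero] at hle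
  exact sub_nonneg.1 hle

theorem legProfile_antitone (h0 : 0 ≤ β)
    (hleg : ∀ r : Vr S, quiverForm S β (simpleRoot (.inr r)) ≤ 0) (i : Fin (S.p + 1))
    (j : Fin (S.m i)) : Antitone (legProfile β i j) := by
  refine antitone_of_convex_of_eventually_zero (N := S.e i j) (fun k => ?_) fun k hk => ?_
  · by_cases hk : k < S.e i j - 1
    · have h := hleg ⟨i, j, ⟨k, hk⟩⟩
      rw [quiverForm_simpleRoot_leg] at h
      dsimp only at h
      lia
    · have hk := not_lt.1 hk
      rw [legProfile_eq_zero hk, legProfile_eq_zero (hk.trans (Nat.le_succ k)), add_zero, mul_zero]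
      exact legProfile_nonneg h0 i j k
  · obtain ⟨k, rfl⟩ := Nat.exists_eq_add_one.2 ((S.he i j).trans_le hk)
    exact legProfile_eq_zero (Nat.sub_le_of_le_add hk)

theorem exists_pos_of_leg_antidominant (h0 : 0 ≤ β)
    (hleg : ∀ r : Vr S, quiverForm S β (simpleRoot (.inr r)) ≤ 0) (hne : β ≠ 0) :
    ∃ v : Vb S, 0 < β (.inl v) := by
  by_contra! hle
  have hbase (v : Vb S) : β (.inl v) = 0 := (hle v).antisymm (h0 _)
  refine hne (funext ?_)
  rintro (v | ⟨i, j, κ⟩)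
  · exact hbase v
  · have hroot : legProfile β i j 0 = 0 := by
      rw [legProfile]
      split_ifs with h
      · exact hbase _
      · exact Finset.sum_eq_zero fun j' _ => hbase _
    have hκ := legProfile_antitone h0 hleg i j (Nat.zero_le (κ + 1))
    rw [legProfile_succ, hroot] at hκ
    exact hκ.antisymm (h0 _)

end Legs

section Lattice

variable {S : Setup}

theorem sum_vI_eq {β : V S → ℤ} (hL : inL S β) (i : {i : Fin (S.p + 1) // Iirr S i}) :
    ∑ j, β (vI S i j) = ∑ j, β (v0 S j) := by
  by_cases h : i.1 = 0
  · obtain rfl : i = i0 S := Subtype.ext h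
    rfl
  · exact (hL i h).symm

theorem inL_of_forall_sum_eq {β : V S → ℤ} {n : ℤ}
    (h : ∀ i : {i : Fin (S.p + 1) // Iirr S i}, ∑ j, β (vI S i j) = n) : inL S β :=
  fun i _ => (h (i0 S)).trans (h i).symm

theorem sum_epsJ (I : ∀ i, Fin (S.m i)) (i : {i : Fin (S.p + 1) // Iirr S i}) :
    ∑ j, epsJ S I (vI S i j) = 1 := by
  simp only [epsJ, vI, ← Fin.ext_iff, Finset.sum_ite_eq', Finset.mem_univ, if_true]

theorem epsJ_le_iff {β : V S → ℤ} (h0 : 0 ≤ β) {I : ∀ i, Fin (S.m i)} :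
    epsJ S I ≤ β ↔ ∀ i : {i : Fin (S.p + 1) // Iirr S i}, 0 < β (vI S i (I i.1)) := by
  refine ⟨fun h i => ?_, fun h => ?_⟩
  · have := h (vI S i (I i.1))
    rw [vI, epsJ, if_pos rfl] at this
    exact this
  · rintro (⟨i, j⟩ | r)
    · rw [epsJ]
      split_ifs with hj
      · obtain rfl := Fin.ext hj
        exact h i
      · exact h0 _
    · exact h0 _

theorem exists_epsJ_le {β : V S → ℤ} (hβ : inLpos S β) {v : Vb S} (hv : 0 < β (.inl v)) :
    ∃ I, epsJ S I ≤ β := by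
  have hsum (i : {i : Fin (S.p + 1) // Iirr S i}) : 0 < ∑ j, β (vI S i j) := by
    rw [sum_vI_eq hβ.1, ← sum_vI_eq hβ.1 v.1]
    exact Finset.sum_pos' (fun j _ => hβ.2 _) ⟨v.2, Finset.mem_univ _, hv⟩
  have hex (i : Fin (S.p + 1)) : ∃ j : Fin (S.m i), ∀ h : Iirr S i, 0 < β (vI S ⟨i, h⟩ j) := by
    by_cases h : Iirr S i
    · obtain ⟨j, -, hj⟩ :=
        Finset.exists_lt_of_sum_lt (Finset.sum_const_zero.trans_lt (hsum ⟨i, h⟩))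
      exact ⟨j, fun _ => hj⟩
    · exact ⟨⟨0, S.hm i⟩, fun h' => absurd h' h⟩
  choose I hI using hex
  exact ⟨I, (epsJ_le_iff hβ.2).2 fun i => hI i.1 i.2⟩

variable (S) in
/-- The vectors `ε_𝐢` and `ε_[i,j,k]`, which play the role of simple roots for `L`. -/
def quasiSimpleRoots : Set (V S → ℤ) :=
  Set.range (epsJ S) ∪ Set.range fun r : Vr S => simpleRoot (.inr r)

theorem epsJ_mem_quasiSimpleRoots (I : ∀ i, Fin (S.m i)) : epsJ S I ∈ quasiSimpleRoots S :=
  .inl ⟨I, rfl⟩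

theorem simpleRoot_mem_quasiSimpleRoots (r : Vr S) :
    simpleRoot (.inr r) ∈ quasiSimpleRoots S :=
  .inr ⟨r, rfl⟩

theorem isPosRealRoot_of_mem_quasiSimpleRoots {α : V S → ℤ} (hα : α ∈ quasiSimpleRoots S) :
    IsPosRealRoot (quiverForm S) α := by
  rcases hα with ⟨I, rfl⟩ | ⟨r, rfl⟩
  · exact isPosRealRoot_epsJ I
  · exact .simple _

theorem inL_of_mem_quasiSimpleRoots {α : V S → ℤ} (hα : α ∈ quasiSimpleRoots S) : inL S α := by
  rcases hα with ⟨I, rfl⟩ | ⟨r, rfl⟩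
  · exact inL_of_forall_sum_eq (sum_epsJ I)
  · refine inL_of_forall_sum_eq fun i => Finset.sum_eq_zero fun j _ => ?_
    exact Pi.single_eq_of_ne Sum.inl_ne_inr _

theorem inL_sub {β γ : V S → ℤ} (hβ : inL S β) (hγ : inL S γ) : inL S (β - γ) := fun i hi => by
  simp only [Pi.sub_apply, Finset.sum_sub_distrib, hβ i hi, hγ i hi]

theorem exists_quasiSimpleRoot_le {β : V S → ℤ} (hβ : inLpos S β) (hne : β ≠ 0) :
    ∃ α ∈ quasiSimpleRoots S, α ≤ β := by
  obtain ⟨a, ha⟩ := Function.ne_iff.1 hne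
  have ha : 0 < β a := (hβ.2 a).lt_of_ne' ha
  rcases a with v | r
  · obtain ⟨I, hI⟩ := exists_epsJ_le hβ ha
    exact ⟨_, epsJ_mem_quasiSimpleRoots I, hI⟩
  · refine ⟨_, simpleRoot_mem_quasiSimpleRoots r, ?_⟩
    exact update_le_iff.2 ⟨ha, fun b _ => hβ.2 b⟩

theorem mem_closure_quasiSimpleRoots {β : V S → ℤ} :
    β ∈ AddSubmonoid.closure (quasiSimpleRoots S) ↔ inLpos S β := by
  refine ⟨fun h => ?_, fun h => ?_⟩
  · induction h using AddSubmonoid.closure_induction with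
    | mem α hα =>
      exact ⟨inL_of_mem_quasiSimpleRoots hα, (isPosRealRoot_of_mem_quasiSimpleRoots hα).nonneg⟩
    | zero => exact ⟨inL_of_forall_sum_eq fun i => Finset.sum_const_zero, fun _ => le_rfl⟩
    | add β γ _ _ hβ hγ =>
      refine ⟨fun i hi => ?_, add_nonneg (a := β) hβ.2 hγ.2⟩
      simp only [Pi.add_apply, Finset.sum_add_distrib, hβ.1 i hi, hγ.1 i hi]
  · induction hn : (height β).toNat using Nat.strong_induction_on generalizing β with
    | _ n ih =>
    by_cases hne : β = 0
    · rw [hne]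
      exact zero_mem _
    obtain ⟨α, hα, hαβ⟩ := exists_quasiSimpleRoot_le h hne
    have hβα : inLpos S (β - α) :=
      ⟨inL_sub h.1 (inL_of_mem_quasiSimpleRoots hα), sub_nonneg.2 hαβ⟩
    have hheight : (height (β - α)).toNat < n := by
      have hα_pos := (isPosRealRoot_of_mem_quasiSimpleRoots hα).height_pos
        (isSymmCartanForm_quiverForm S)
      have hβα_nonneg := height_nonneg (v := β - α) hβα.2
      rw [map_sub] at hβα_nonneg ⊢
      lia
    rw [← sub_add_cancel β α]
    exact add_mem (ih _ hheight hβα rfl) (AddSubmonoid.subset_closure hα)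

end Lattice

section Splitting

variable {S : Setup} {β : V S → ℤ} {I J : ∀ i, Fin (S.m i)}

theorem exists_branch_of_forall_orthogonal (h0 : 0 ≤ β) (hI : epsJ S I ≤ β)
    (horth : ∀ I', epsJ S I' ≤ β → quiverForm S (epsJ S I') (epsJ S J) = 0) :
    ∃ p : {i : Fin (S.p + 1) // Iirr S i},
      (∀ i : {i : Fin (S.p + 1) // Iirr S i}, i ≠ p → I i.1 = J i.1) ∧
      ∀ j, 0 < β (vI S p j) → j ≠ J p.1 ∧ dcnt S p.1 j (J p.1) = 0 := by
  obtain ⟨p, -, -, hp⟩ := exists_differ_only_at_of_form_epsJ_eq_zero (horth I hI)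
  refine ⟨p, hp, fun j hj => ?_⟩
  have hupdate : epsJ S (Function.update I p.1 j) ≤ β := by
    refine (epsJ_le_iff h0).2 fun i => ?_
    by_cases hi : i = p
    · subst hi
      rwa [Function.update_self]
    · rw [Function.update_of_ne (Subtype.coe_ne_coe.2 hi)]
      exact (epsJ_le_iff h0).1 hI i
  obtain ⟨p', hne, hd, -⟩ := exists_differ_only_at_of_form_epsJ_eq_zero (horth _ hupdate)
  obtain rfl : p' = p := by
    by_contra hp'
    rw [Function.update_of_ne (Subtype.coe_ne_coe.2 hp')] at hne
    exact hne (hp p' hp')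
  rw [Function.update_self] at hne hd
  exact ⟨hne, hd⟩

theorem form_epsJ_sub_form_epsJ {p : {i : Fin (S.p + 1) // Iirr S i}}
    (hp : ∀ i : {i : Fin (S.p + 1) // Iirr S i}, i ≠ p → I i.1 = J i.1) :
    quiverForm S β (epsJ S I) - quiverForm S β (epsJ S J) =
      quiverForm S β (simpleRoot (vI S p (I p.1))) -
        quiverForm S β (simpleRoot (vI S p (J p.1))) := by
  rw [epsJ_eq_sum, epsJ_eq_sum, map_sum, map_sum, ← Finset.sum_sub_distrib]
  refine Fintype.sum_eq_single p fun i hi => ?_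
  rw [hp i hi, sub_self]

section Branch

variable {p : {i : Fin (S.p + 1) // Iirr S i}} {j j' : Fin (S.m p.1)}

theorem two_mul_le_sum_base (h0 : 0 ≤ β) (hj : 0 < β (vI S p j))
    (hj' : ∀ l, 0 < β (vI S p l) → l ≠ j' ∧ dcnt S p.1 l j' = 0) :
    2 * β (vI S p j) ≤ ∑ v : Vb S, β (.inl v) *
      (cartanMatrix S (.inl v) (vI S p j) - cartanMatrix S (.inl v) (vI S p j')) := by
  let c (a : V S) : ℤ := cartanMatrix S a (vI S p j) - cartanMatrix S a (vI S p j')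
  have hc_ne {i} (hi : i ≠ p) (l : Fin (S.m i.1)) : c (vI S i l) = 0 := by
    simp only [c, cartanMatrix_vI_of_ne_left hi, sub_self]
  have hc_self : c (vI S p j) = 2 := by
    have hself : cartanMatrix S (vI S p j) (vI S p j) = 2 := by
      rw [← quiverForm_simpleRoot, (isSymmCartanForm_quiverForm S).self]
    simp only [c, hself, cartanMatrix_vI_of_ne_right (hj' j hj).1, (hj' j hj).2, Nat.cast_zero,
      neg_zero, sub_zero]
  have hc_of_ne {l} (hl : 0 < β (vI S p l)) (hlj : l ≠ j) : c (vI S p l) = 0 := by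
    have hd : dcnt S p.1 l j = 0 :=
      dcnt_eq_zero_trans (hj' l hl).2 (dcnt_comm p.1 j j' ▸ (hj' j hj).2)
    simp only [c, cartanMatrix_vI_of_ne_right hlj, cartanMatrix_vI_of_ne_right (hj' l hl).1, hd,
      (hj' l hl).2, sub_self]
  have hterm (i) (l : Fin (S.m i.1)) : 0 ≤ β (vI S i l) * c (vI S i l) := by
    by_cases hi : i = p
    · subst hi
      rcases (h0 (vI S i l)).eq_or_lt' with hl | hl
      · rw [hl, Pi.zero_apply, zero_mul]
      by_cases hlj : l = j
      · rw [hlj, hc_self]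
        exact mul_nonneg (h0 _) zero_le_two
      · rw [hc_of_ne hl hlj, mul_zero]
    · rw [hc_ne hi, mul_zero]
  rw [← hc_self, mul_comm]
  exact Finset.single_le_sum (f := fun v : Vb S => β (.inl v) * c (.inl v))
    (fun v _ => hterm v.1 v.2) (Finset.mem_univ (⟨p, j⟩ : Vb S))

theorem neg_legProfile_le_sum_leg (h0 : 0 ≤ β) :
    -legProfile β p.1 j 1 ≤ ∑ r : Vr S, β (.inr r) *
      (cartanMatrix S (.inr r) (vI S p j) - cartanMatrix S (.inr r) (vI S p j')) := by
  rw [← sum_ite_leg, ← Finset.sum_neg_distrib]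
  refine Finset.sum_le_sum ?_
  rintro ⟨i, l, κ⟩ -
  have hr := h0 (.inr ⟨i, l, κ⟩)
  simp only [Pi.zero_apply] at hr
  have hentry (j : Fin (S.m p.1)) : cartanMatrix S (.inr ⟨i, l, κ⟩) (vI S p j) =
      -((if i = p.1 ∧ (l : ℕ) = j ∧ (κ : ℕ) = 0 then 1 else 0) +
        (if ¬Iirr S i ∧ p.1 = 0 ∧ (l : ℕ) = 0 ∧ (κ : ℕ) = 0 then 1 else 0)) := by
    simp [cartanMatrix, arr, vI]
  rw [hentry, hentry]
  dsimp only
  split_ifs <;> lia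

theorem le_form_sub_form (h0 : 0 ≤ β) (hj : 0 < β (vI S p j))
    (hj' : ∀ l, 0 < β (vI S p l) → l ≠ j' ∧ dcnt S p.1 l j' = 0) :
    2 * β (vI S p j) - legProfile β p.1 j 1 ≤
      quiverForm S β (simpleRoot (vI S p j)) - quiverForm S β (simpleRoot (vI S p j')) := by
  rw [quiverForm_simpleRoot_right, quiverForm_simpleRoot_right, ← Finset.sum_sub_distrib,
    Fintype.sum_sum_type, sub_eq_add_neg]
  simp only [← mul_sub]
  exact add_le_add (two_mul_le_sum_base h0 hj hj') (neg_legProfile_le_sum_leg h0)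

end Branch

theorem not_isOrthogonalSplitting (β γ : V S → ℤ) :
    ¬IsOrthogonalSplitting (quiverForm S) (AddSubmonoid.closure (quasiSimpleRoots S)) β γ := by
  intro h
  have hβ := mem_closure_quasiSimpleRoots.1 h.left_mem
  have hγ := mem_closure_quasiSimpleRoots.1 h.right_mem
  have hgen {α : V S → ℤ} (hα : α ∈ quasiSimpleRoots S) :
      α ∈ AddSubmonoid.closure (quasiSimpleRoots S) := AddSubmonoid.subset_closure hα
  have hβleg (r : Vr S) := h.left_nonpos _ (hgen (simpleRoot_mem_quasiSimpleRoots r))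
  have hγleg (r : Vr S) := h.right_nonpos _ (hgen (simpleRoot_mem_quasiSimpleRoots r))
  obtain ⟨v, hv⟩ := exists_pos_of_leg_antidominant hβ.2 hβleg h.left_ne_zero
  obtain ⟨w, hw⟩ := exists_pos_of_leg_antidominant hγ.2 hγleg h.right_ne_zero
  obtain ⟨I, hI⟩ := exists_epsJ_le hβ hv
  obtain ⟨J, hJ⟩ := exists_epsJ_le hγ hw
  have hsub {δ K} (hδ : inLpos S δ) (hK : epsJ S K ≤ δ) :
      δ - epsJ S K ∈ AddSubmonoid.closure (quasiSimpleRoots S) :=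
    mem_closure_quasiSimpleRoots.2
      ⟨inL_sub hδ.1 (inL_of_mem_quasiSimpleRoots (epsJ_mem_quasiSimpleRoots K)), sub_nonneg.2 hK⟩
  have hε (K) := hgen (epsJ_mem_quasiSimpleRoots (S := S) K)
  obtain ⟨p, hp, hbranch⟩ := exists_branch_of_forall_orthogonal hβ.2 hI fun K hK =>
    h.orthogonal _ (hε K) _ (hε J) (hsub hβ hK) (hsub hγ hJ)
  have hβI : quiverForm S β (epsJ S I) ≤ 0 := h.left_nonpos _ (hε I)
  have hβJ : quiverForm S β (epsJ S J) = 0 :=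
    h.orthogonal β h.left_mem _ (hε J) ((sub_self β).symm ▸ zero_mem _) (hsub hγ hJ)
  have hpI : 0 < β (vI S p (I p.1)) := (epsJ_le_iff hβ.2).1 hI p
  have hlower := le_form_sub_form hβ.2 hpI hbranch
  have hleg := legProfile_antitone hβ.2 hβleg p.1 (I p.1) zero_le_one
  rw [legProfile_zero] at hleg
  rw [← form_epsJ_sub_form_epsJ hp] at hlower
  lia

end Splitting

theorem statement6_general (S : Setup) (β : V S → ℤ) (hβ : inLpos S β) (hne : β ≠ 0)
    (hJ : ∀ I, bform S β (epsJ S I) ≤ 0)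
    (hleg : ∀ i j κ, bform S β (eps S (.inr ⟨i, j, κ⟩)) ≤ 0) : isImagRoot S β := by
  have hβG : ∀ α ∈ quasiSimpleRoots S, quiverForm S β α ≤ 0 := by
    rintro _ (⟨I, rfl⟩ | ⟨⟨i, j, κ⟩, rfl⟩)
    · exact (quiverForm_apply S β _).trans_le (hJ I)
    · dsimp only
      rw [quiverForm_apply, ← eps_eq_simpleRoot]
      exact hleg i j κ
  obtain ⟨l, γ, hγ, rfl⟩ := exists_isFundamental (isSymmCartanForm_quiverForm S)
    (fun _ => isPosRealRoot_of_mem_quasiSimpleRoots) (mem_closure_quasiSimpleRoots.2 hβ) hne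
    hβG not_isOrthogonalSplitting
  exact ⟨l, γ, .inl hγ.fund, (reflList_eq_foldr S l γ).symm⟩

/-- Every element of the quasi-fundamental set `F̃` is a positive imaginary root
of the quiver `Q`. -/
theorem statement6 (S : Setup) (β : V S → ℤ) (hβ : quasiFund S β) :
    isImagRoot S β ∧ ∀ a, 0 ≤ β a := by
  obtain ⟨hL, h0, hne, hJ, hleg, -⟩ := hβ
  exact ⟨statement6_general S β ⟨hL, h0⟩ hne hJ hleg, h0⟩
end
end DS
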